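/- arXiv:2009.03570 — 2 statements merged into one kernel-verified Lean document; each statement's English description precedes it below -/
import Mathlib

section
/- Fix an integer d ≥ 1 and a real number m with 0 < m < 2, and set λ := inf_{k ∈ ℝ^d} f_m(k)². Then λ > 0, and for every real C with 0 < C < λ there exists ε > 0 with the following property: for every finite-dimensional complex Hilbert space H, every Clifford system (c_1, …, c_d, γ) on H, and all unitaries U_1, …, U_d on H, each commuting with every c_j and with γ, satisfying ‖U_j U_l − U_l U_j‖ < ε for all j, l, the operator inequality D(1, m)² ≥ C·1 holds; in particular the massive hermitian Wilson–Dirac operator D(1, m) is invertible. -/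
noncomputable section

/-- A Clifford system `(c_1, …, c_d, γ)` on a complex Hilbert space `H`:
`c_j* = -c_j`, `c_j c_l + c_l c_j = -2 δ_{jl} 1`, `γ* = γ`, `γ² = 1`, `γ c_j = -c_j γ`. -/
structure CliffordSystem (H : Type*) [NormedAddCommGroup H] [InnerProductSpace ℂ H]
    [CompleteSpace H] (d : ℕ) where
  c : Fin d → H →L[ℂ] H
  γ : H →L[ℂ] H
  c_skew : ∀ j, star (c j) = -c j
  c_rel : ∀ j l, c j * c l + c l * c j =
    if j = l then (-2 : ℂ) • (1 : H →L[ℂ] H) else 0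
  γ_sa : star γ = γ
  γ_sq : γ * γ = 1
  γ_anticomm : ∀ j, γ * c j = -(c j * γ)

variable {H : Type*} [NormedAddCommGroup H] [InnerProductSpace ℂ H] [CompleteSpace H]

/-- `x = (U - U*)/(2i)`, the "imaginary part" of a unitary `U`. -/
def xPart (U : H →L[ℂ] H) : H →L[ℂ] H := ((2 * Complex.I)⁻¹ : ℂ) • (U - star U)

/-- `y = (U + U*)/2`, the "real part" of a unitary `U`. -/
def yPart (U : H →L[ℂ] H) : H →L[ℂ] H := ((2 : ℂ)⁻¹ : ℂ) • (U + star U)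

/-- The massive hermitian Wilson--Dirac operator
`D(κ, m) = κ·Σ_j i x_j c_j + γ·(κ·Σ_j (y_j − 1) + m)`. -/
def wilsonDirac {d : ℕ} (cs : CliffordSystem H d) (U : Fin d → H →L[ℂ] H)
    (κ m : ℝ) : H →L[ℂ] H :=
  (κ : ℂ) • (∑ j, Complex.I • (xPart (U j) * cs.c j)) +
    cs.γ * ((κ : ℂ) • (∑ j, (yPart (U j) - 1)) + (m : ℂ) • (1 : H →L[ℂ] H))

/-- `f_m(k)² = Σ_j sin²(2π k_j) + (Σ_j (cos(2π k_j) − 1) + m)²`. -/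
def fmSq (d : ℕ) (m : ℝ) (k : Fin d → ℝ) : ℝ :=
  ∑ j, Real.sin (2 * Real.pi * k j) ^ 2 +
    (∑ j, (Real.cos (2 * Real.pi * k j) - 1) + m) ^ 2

/-- `E_{>0}(A)`: the sum of the eigenspaces of `A` with positive (real) eigenvalue. -/
def posSpace (A : H →L[ℂ] H) : Submodule ℂ H :=
  ⨆ (μ : ℝ) (_ : 0 < μ), Module.End.eigenspace (A.toLinearMap) (μ : ℂ)

/-- `E_{<0}(A)`: the sum of the eigenspaces of `A` with negative (real) eigenvalue. -/
def negSpace (A : H →L[ℂ] H) : Submodule ℂ H :=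
  ⨆ (μ : ℝ) (_ : μ < 0), Module.End.eigenspace (A.toLinearMap) (μ : ℂ)

/-- `𝐈(A) = (dim E_{>0}(A) − dim E_{<0}(A))/2`, a priori a half-integer. -/
def Ind (A : H →L[ℂ] H) : ℚ :=
  ((Module.finrank ℂ (posSpace A) : ℚ) - (Module.finrank ℂ (negSpace A) : ℚ)) / 2

end

/-!
If the `U j` commuted, they could be diagonalized jointly and `D(1, m)²` would become multiplication
by `f_m(k)²` at the joint eigenvalues `exp (2πi k_j)`. For almost commuting `U j` this is done
locally. Averaging `(ζ⁻¹ U) ^ n` over `n < M` gives, as `ζ` runs through the `M`-th roots of unity,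
operators `P ζ` which by Parseval satisfy `∑ (P ζ)* (P ζ) = 1`, while telescoping the geometric sum
bounds `P ζ (U - ζ)` by `2 / √M` in square mean. Products of these over `j` form a joint partition
on whose pieces `D(1, m)` is close to the operator with the `U j` replaced by scalars `ζ j`, whose
square is the scalar `f_m(k)² ≥ λ` at `ζ j = exp (2πi k_j)`. Summing over the pieces gives
`‖D v‖ ≥ (√λ - O(1 / √M) - O(M ε)) ‖v‖`; choose `M` large, then `ε` small.
-/

section Symbol

lemma fmSq_nonneg (d : ℕ) (m : ℝ) (k : Fin d → ℝ) : 0 ≤ fmSq d m k := by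
  unfold fmSq
  positivity

lemma fmSq_fract (d : ℕ) (m : ℝ) (k : Fin d → ℝ) :
    fmSq d m (fun j => Int.fract (k j)) = fmSq d m k := by
  have h (j : Fin d) :
      2 * Real.pi * Int.fract (k j) = 2 * Real.pi * k j - ⌊k j⌋ * (2 * Real.pi) := by
    rw [Int.fract]
    ring
  simp only [fmSq, h, Real.sin_sub_int_mul_two_pi, Real.cos_sub_int_mul_two_pi]

lemma exists_fmSq_eq_sInf (d : ℕ) (m : ℝ) : ∃ k, fmSq d m k = sInf (Set.range (fmSq d m)) := by
  have hcont : Continuous (fmSq d m) := by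
    unfold fmSq
    fun_prop
  have hrange : Set.range (fmSq d m) = fmSq d m '' Set.Icc 0 1 := by
    refine Set.Subset.antisymm ?_ (Set.image_subset_range _ _)
    rintro _ ⟨k, rfl⟩
    exact ⟨fun j => Int.fract (k j), ⟨fun j => Int.fract_nonneg _,
      fun j => (Int.fract_lt_one _).le⟩, fmSq_fract d m k⟩
  rw [← Set.mem_range, hrange]
  exact (isCompact_Icc.image hcont).sInf_mem ((Set.nonempty_Icc.2 zero_le_one).image _)

lemma fmSq_eq_zero_iff {d : ℕ} {m : ℝ} {k : Fin d → ℝ} :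
    fmSq d m k = 0 ↔
      (∀ j, Real.sin (2 * Real.pi * k j) = 0) ∧
        ∑ j, (Real.cos (2 * Real.pi * k j) - 1) + m = 0 := by
  rw [fmSq, add_eq_zero_iff_of_nonneg (Finset.sum_nonneg fun _ _ => sq_nonneg _) (sq_nonneg _),
    Finset.sum_eq_zero_iff_of_nonneg fun _ _ => sq_nonneg _]
  simp only [Finset.mem_univ, true_imp_iff, sq_eq_zero_iff]

lemma exists_fmSq_eq_zero_iff {d : ℕ} {m : ℝ} :
    (∃ k, fmSq d m k = 0) ↔ ∃ n : ℕ, n ≤ d ∧ m = 2 * n := by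
  have sum_ite (p : Fin d → Prop) [DecidablePred p] :
      ∑ j, (if p j then -2 else 0 : ℝ) = -(2 * (Finset.univ.filter p).card) := by
    rw [← Finset.sum_filter, Finset.sum_const, nsmul_eq_mul]
    ring
  constructor
  · rintro ⟨k, hk⟩
    obtain ⟨hsin, hmass⟩ := fmSq_eq_zero_iff.1 hk
    have hcos (j : Fin d) : Real.cos (2 * Real.pi * k j) - 1 =
        if Real.cos (2 * Real.pi * k j) = -1 then -2 else 0 := by
      rcases Real.sin_eq_zero_iff_cos_eq.1 (hsin j) with h | h <;> rw [h] <;> norm_num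
    simp only [hcos, sum_ite] at hmass
    exact ⟨_, (Finset.card_filter_le _ _).trans_eq (Finset.card_fin d),
      (neg_add_eq_zero.1 hmass).symm⟩
  · rintro ⟨n, hn, rfl⟩
    have hpi : 2 * Real.pi * (1 / 2) = Real.pi := by ring
    refine ⟨fun j => if (j : ℕ) < n then 1 / 2 else 0, fmSq_eq_zero_iff.2 ⟨fun j => ?_, ?_⟩⟩
    · split_ifs <;> simp only [hpi, mul_zero, Real.sin_pi, Real.sin_zero]
    · have hcos (j : Fin d) : Real.cos (2 * Real.pi * if (j : ℕ) < n then 1 / 2 else 0) - 1 =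
          if (j : ℕ) < n then -2 else 0 := by
        split_ifs <;> norm_num [hpi]
      simp only [hcos, sum_ite, Fin.card_filter_val_lt, min_eq_right hn, neg_add_cancel]

lemma sInf_fmSq_pos_iff {d : ℕ} {m : ℝ} :
    0 < sInf (Set.range (fmSq d m)) ↔ ∀ n : ℕ, n ≤ d → m ≠ 2 * n := by
  obtain ⟨k, hk⟩ := exists_fmSq_eq_sInf d m
  have hle (l : Fin d → ℝ) : fmSq d m k ≤ fmSq d m l :=
    hk ▸ csInf_le ⟨0, Set.forall_mem_range.2 (fmSq_nonneg d m)⟩ (Set.mem_range_self l)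
  rw [← hk, (fmSq_nonneg d m k).lt_iff_ne', ← not_iff_not]
  push Not
  rw [← exists_fmSq_eq_zero_iff]
  exact ⟨fun h => ⟨k, h⟩, fun ⟨l, hl⟩ => le_antisymm (hl ▸ hle l) (fmSq_nonneg d m k)⟩

lemma sInf_fmSq_le_of_norm_eq_one {d : ℕ} (m : ℝ) {z : Fin d → ℂ} (hz : ∀ j, ‖z j‖ = 1) :
    sInf (Set.range (fmSq d m)) ≤ ∑ j, (z j).im ^ 2 + (∑ j, ((z j).re - 1) + m) ^ 2 := by
  refine csInf_le ⟨0, Set.forall_mem_range.2 (fmSq_nonneg d m)⟩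
    ⟨fun j => (z j).arg / (2 * Real.pi), ?_⟩
  have hz0 (j : Fin d) : z j ≠ 0 := norm_ne_zero_iff.1 (by simp [hz j])
  simp only [fmSq, mul_div_cancel₀ _ Real.two_pi_pos.ne', Complex.sin_arg,
    Complex.cos_arg (hz0 _), hz, div_one]

end Symbol

section Column

variable {𝕜 E F G ι κ : Type*} [NontriviallyNormedField 𝕜]
  [SeminormedAddCommGroup E] [NormedSpace 𝕜 E] [SeminormedAddCommGroup F] [NormedSpace 𝕜 F]
  [SeminormedAddCommGroup G] [NormedSpace 𝕜 G]

/-- The column `v ↦ (X a v)ₐ` of a finite family of operators, with values in the `ℓ²` direct sum.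
Bounding its norm controls the family `X` in square mean. -/
noncomputable def column (X : ι → E →L[𝕜] F) : E →L[𝕜] PiLp 2 (fun _ : ι => F) :=
  (PiLp.continuousLinearEquiv 2 𝕜 fun _ : ι => F).symm ∘L ContinuousLinearMap.pi X

variable [Fintype ι]

lemma norm_column_apply_sq (X : ι → E →L[𝕜] F) (v : E) :
    ‖column X v‖ ^ 2 = ∑ a, ‖X a v‖ ^ 2 :=
  PiLp.norm_sq_eq_of_L2 _ _

lemma norm_column_nonneg (X : ι → E →L[𝕜] F) : 0 ≤ ‖column X‖ := norm_nonneg _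

lemma norm_column_add_le (X Y : ι → E →L[𝕜] F) :
    ‖column fun a => X a + Y a‖ ≤ ‖column X‖ + ‖column Y‖ :=
  norm_add_le (column X) (column Y)

lemma norm_column_sub_le (X Y : ι → E →L[𝕜] F) :
    ‖column fun a => X a - Y a‖ ≤ ‖column X‖ + ‖column Y‖ :=
  norm_sub_le (column X) (column Y)

lemma norm_column_smul (c : 𝕜) (X : ι → E →L[𝕜] F) :
    ‖column fun a => c • X a‖ = ‖c‖ * ‖column X‖ :=
  norm_smul c (column X)

lemma norm_column_sum_le (s : Finset κ) (X : κ → ι → E →L[𝕜] F) :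
    ‖column fun a => ∑ j ∈ s, X j a‖ ≤ ∑ j ∈ s, ‖column (X j)‖ := by
  have hsum : column (fun a => ∑ j ∈ s, X j a) = ∑ j ∈ s, column (X j) := by
    ext v a
    simp [column]
  exact hsum ▸ norm_sum_le _ _

lemma norm_column_comp_le (X : ι → F →L[𝕜] G) (T : E →L[𝕜] F) :
    ‖column fun a => X a ∘L T‖ ≤ ‖column X‖ * ‖T‖ :=
  (column X).opNorm_comp_le T

lemma norm_column_le {X : ι → E →L[𝕜] F} {r : ℝ} (hr : 0 ≤ r)
    (h : ∀ v, ∑ a, ‖X a v‖ ^ 2 ≤ r ^ 2 * ‖v‖ ^ 2) : ‖column X‖ ≤ r := by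
  refine ContinuousLinearMap.opNorm_le_bound _ hr fun v => ?_
  rw [← pow_le_pow_iff_left₀ (norm_nonneg _) (by positivity) two_ne_zero, norm_column_apply_sq,
    mul_pow]
  exact h v

lemma sum_norm_sq_apply_le_norm_column (X : ι → E →L[𝕜] F) (v : E) :
    ∑ a, ‖X a v‖ ^ 2 ≤ ‖column X‖ ^ 2 * ‖v‖ ^ 2 := by
  rw [← norm_column_apply_sq, ← mul_pow]
  gcongr
  exact (column X).le_opNorm v

lemma norm_column_le_mul {X : ι → E →L[𝕜] F} {Y : ι → E →L[𝕜] G} {r : ℝ} (hr : 0 ≤ r)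
    (h : ∀ a v, ‖X a v‖ ≤ r * ‖Y a v‖) : ‖column X‖ ≤ r * ‖column Y‖ := by
  refine norm_column_le (by positivity) fun v => ?_
  calc ∑ a, ‖X a v‖ ^ 2 ≤ ∑ a, (r * ‖Y a v‖) ^ 2 := by gcongr with a; exact h a v
    _ = r ^ 2 * ∑ a, ‖Y a v‖ ^ 2 := by simp only [mul_pow, Finset.mul_sum]
    _ ≤ r ^ 2 * (‖column Y‖ ^ 2 * ‖v‖ ^ 2) := by
      gcongr
      exact sum_norm_sq_apply_le_norm_column Y v
    _ = (r * ‖column Y‖) ^ 2 * ‖v‖ ^ 2 := by ring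

variable {ν : Type*} [Fintype κ] [Fintype ν]

lemma norm_column_le_of_equiv_mul (e : κ × ι ≃ ν) {X : ν → E →L[𝕜] E} {Y : κ → E →L[𝕜] E}
    {Z : ι → E →L[𝕜] E} (h : ∀ p, X (e p) = Y p.1 * Z p.2) :
    ‖column X‖ ≤ ‖column Y‖ * ‖column Z‖ := by
  refine norm_column_le (by positivity) fun v => ?_
  calc ∑ c, ‖X c v‖ ^ 2
      = ∑ a, ∑ b, ‖Y b (Z a v)‖ ^ 2 := by
        rw [← e.sum_comp, Fintype.sum_prod_type_right]
        simp only [h, mul_apply_eq_comp]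
    _ ≤ ∑ a, ‖column Y‖ ^ 2 * ‖Z a v‖ ^ 2 := by
        gcongr with a
        exact sum_norm_sq_apply_le_norm_column Y (Z a v)
    _ ≤ ‖column Y‖ ^ 2 * (‖column Z‖ ^ 2 * ‖v‖ ^ 2) := by
        rw [← Finset.mul_sum]
        gcongr
        exact sum_norm_sq_apply_le_norm_column Z v
    _ = (‖column Y‖ * ‖column Z‖) ^ 2 * ‖v‖ ^ 2 := by ring

lemma norm_column_le_of_equiv_mul_add_mul (e : κ × ι ≃ ν) {X : ν → E →L[𝕜] E}
    {Y Y' : κ → E →L[𝕜] E} {Z Z' : ι → E →L[𝕜] E}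
    (h : ∀ p, X (e p) = Y p.1 * Z p.2 + Y' p.1 * Z' p.2) :
    ‖column X‖ ≤ ‖column Y‖ * ‖column Z‖ + ‖column Y'‖ * ‖column Z'‖ := by
  have hX : X = fun c => Y (e.symm c).1 * Z (e.symm c).2 + Y' (e.symm c).1 * Z' (e.symm c).2 :=
    funext fun c => by rw [← h, e.apply_symm_apply]
  rw [hX]
  refine (norm_column_add_le _ _).trans (add_le_add ?_ ?_) <;>
    exact norm_column_le_of_equiv_mul e fun p => by rw [e.symm_apply_apply]

end Column

section QuadraticPartition

variable {𝕜 E ι κ : Type*} [NontriviallyNormedField 𝕜] [SeminormedAddCommGroup E]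
  [NormedSpace 𝕜 E] [Fintype ι] [Fintype κ]

/-- A quadratic partition of unity: a finite family of operators with `∑ a, (P a)* (P a) = 1`,
stated through norms so that no adjoints are needed. -/
def IsQuadraticPartition (P : ι → E →L[𝕜] E) : Prop :=
  ∀ v, ∑ a, ‖P a v‖ ^ 2 = ‖v‖ ^ 2

namespace IsQuadraticPartition

lemma norm_column_apply {P : ι → E →L[𝕜] E} (hP : IsQuadraticPartition P) (v : E) :
    ‖column P v‖ = ‖v‖ := by
  rw [← sq_eq_sq₀ (norm_nonneg _) (norm_nonneg _), norm_column_apply_sq, hP v]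

lemma norm_column_le_one {P : ι → E →L[𝕜] E} (hP : IsQuadraticPartition P) : ‖column P‖ ≤ 1 :=
  norm_column_le zero_le_one fun v => by rw [hP v, one_pow, one_mul]

lemma prod_mul {Q : κ → E →L[𝕜] E} {P : ι → E →L[𝕜] E} (hQ : IsQuadraticPartition Q)
    (hP : IsQuadraticPartition P) :
    IsQuadraticPartition fun p : κ × ι => Q p.1 * P p.2 := fun v => by
  rw [Fintype.sum_prod_type_right]
  exact (Finset.sum_congr rfl fun a _ => hQ (P a v)).trans (hP v)

/-- IMS localization: lower bounds on the local models `S a` pass to `T`, up to the square-mean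
size of the localized differences. -/
theorem sub_mul_norm_le_norm_apply {P : ι → E →L[𝕜] E} (hP : IsQuadraticPartition P)
    {T : E →L[𝕜] E} {S : ι → E →L[𝕜] E} {r δ : ℝ} (hr : 0 ≤ r)
    (hS : ∀ a v, r * ‖v‖ ≤ ‖S a v‖) (hcomm : ∀ a, Commute (P a) (S a))
    (hδ : ‖column fun a => P a * (T - S a)‖ ≤ δ) (v : E) : (r - δ) * ‖v‖ ≤ ‖T v‖ := by
  have hSP : r * ‖v‖ ≤ ‖column (fun a => S a * P a) v‖ := by
    rw [← pow_le_pow_iff_left₀ (by positivity) (norm_nonneg _) two_ne_zero, norm_column_apply_sq,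
      mul_pow, ← hP v, Finset.mul_sum]
    gcongr with a
    rw [← mul_pow]
    gcongr
    exact hS a (P a v)
  have hdiff : column (fun a => S a * P a) v =
      column P (T v) - column (fun a => P a * (T - S a)) v := by
    have hfam : (fun a => S a * P a) = fun a => P a * T - P a * (T - S a) := by
      funext a
      rw [mul_sub, sub_sub_cancel, (hcomm a).eq]
    rw [hfam]
    rfl
  have htri : ‖column (fun a => S a * P a) v‖ ≤ ‖T v‖ + δ * ‖v‖ := by
    rw [hdiff, ← hP.norm_column_apply (T v)]
    exact (norm_sub_le _ _).trans (by gcongr; exact ContinuousLinearMap.le_of_opNorm_le _ hδ v)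
  linarith

end IsQuadraticPartition

end QuadraticPartition

section FourierLocalizer

lemma norm_lie_pow_le {A : Type*} [SeminormedRing A] {U : A} (hU : ‖U‖ ≤ 1) (X : A) (n : ℕ) :
    ‖⁅U ^ n, X⁆‖ ≤ n * ‖⁅U, X⁆‖ := by
  have norm_mul_pow_le (Y : A) (k : ℕ) : ‖Y * U ^ k‖ ≤ ‖Y‖ := by
    induction k with
    | zero => simp
    | succ k ih =>
      rw [pow_succ, ← mul_assoc]
      exact ((norm_mul_le _ _).trans (mul_le_of_le_one_right (norm_nonneg _) hU)).trans ih
  induction n with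
  | zero => simp [Ring.lie_def]
  | succ n ih =>
    have hsplit : ⁅U ^ (n + 1), X⁆ = U * ⁅U ^ n, X⁆ + ⁅U, X⁆ * U ^ n := by
      simp only [Ring.lie_def, pow_succ']
      noncomm_ring
    calc ‖⁅U ^ (n + 1), X⁆‖ ≤ ‖U * ⁅U ^ n, X⁆‖ + ‖⁅U, X⁆ * U ^ n‖ := hsplit ▸ norm_add_le _ _
      _ ≤ n * ‖⁅U, X⁆‖ + ‖⁅U, X⁆‖ := add_le_add
          (((norm_mul_le _ _).trans (mul_le_of_le_one_left (norm_nonneg _) hU)).trans ih)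
          (norm_mul_pow_le _ n)
      _ = (n + 1 : ℕ) * ‖⁅U, X⁆‖ := by push_cast; ring

lemma norm_pow_apply_of_isometry {R E : Type*} [Semiring R] [SeminormedAddCommGroup E]
    [Module R E] {U : E →L[R] E} (hU : ∀ v, ‖U v‖ = ‖v‖) (n : ℕ) (v : E) :
    ‖(U ^ n) v‖ = ‖v‖ := by
  induction n with
  | zero => simp
  | succ n ih => rw [pow_succ', mul_apply_eq_comp, hU, ih]

lemma sum_norm_sq_sum_smul {𝕜 H ι κ : Type*} [RCLike 𝕜] [SeminormedAddCommGroup H]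
    [InnerProductSpace 𝕜 H] [Fintype ι] [DecidableEq κ] {B : ι → κ → 𝕜} {s : Finset κ} {c : ℝ}
    (hB : ∀ n ∈ s, ∀ l ∈ s, ∑ a, starRingEnd 𝕜 (B a n) * B a l = if n = l then (c : 𝕜) else 0)
    (u : κ → H) :
    ∑ a, ‖∑ n ∈ s, B a n • u n‖ ^ 2 = c * ∑ n ∈ s, ‖u n‖ ^ 2 := by
  have hin (w : H) : ((‖w‖ : ℝ) : 𝕜) ^ 2 = inner 𝕜 w w := (inner_self_eq_norm_sq_to_K w).symm
  rw [← RCLike.ofReal_inj (K := 𝕜)]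
  push_cast
  calc ∑ a, ((‖∑ n ∈ s, B a n • u n‖ : ℝ) : 𝕜) ^ 2
      = ∑ a, ∑ n ∈ s, ∑ l ∈ s, starRingEnd 𝕜 (B a n) * B a l * inner 𝕜 (u n) (u l) := by
        refine Finset.sum_congr rfl fun a _ => ?_
        rw [hin, sum_inner]
        refine Finset.sum_congr rfl fun n _ => ?_
        rw [inner_sum]
        simp only [inner_smul_left, inner_smul_right, mul_assoc, mul_left_comm]
    _ = ∑ n ∈ s, ∑ l ∈ s, (∑ a, starRingEnd 𝕜 (B a n) * B a l) * inner 𝕜 (u n) (u l) := by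
        rw [Finset.sum_comm]
        refine Finset.sum_congr rfl fun n _ => ?_
        rw [Finset.sum_comm]
        simp only [Finset.sum_mul]
    _ = ∑ n ∈ s, c * inner 𝕜 (u n) (u n) := by
        refine Finset.sum_congr rfl fun n hn => ?_
        rw [Finset.sum_eq_single_of_mem n hn fun l hl hne => by
          rw [hB n hn l hl, if_neg hne.symm, zero_mul], hB n hn n hn, if_pos rfl]
    _ = c * ∑ n ∈ s, ((‖u n‖ : ℝ) : 𝕜) ^ 2 := by simp only [hin, Finset.mul_sum]

variable {M d : ℕ} [NeZero M]

lemma norm_stdAddChar (a : ZMod M) : ‖(ZMod.stdAddChar a : ℂ)‖ = 1 :=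
  AddChar.norm_apply _ a

lemma stdAddChar_pow_modulus (a : ZMod M) : (ZMod.stdAddChar a : ℂ) ^ M = 1 := by
  rw [← AddChar.map_nsmul_eq_pow, nsmul_eq_mul, ZMod.natCast_self, zero_mul,
    AddChar.map_zero_eq_one]

lemma stdAddChar_mul_stdAddChar_neg (a : ZMod M) :
    (ZMod.stdAddChar a : ℂ) * ZMod.stdAddChar (-a) = 1 := by
  rw [← AddChar.map_add_eq_mul, add_neg_cancel, AddChar.map_zero_eq_one]

lemma sum_conj_stdAddChar_pow_mul_pow {n l : ℕ} (hn : n < M) (hl : l < M) :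
    ∑ a : ZMod M, starRingEnd ℂ (ZMod.stdAddChar (-a) ^ n) * ZMod.stdAddChar (-a) ^ l =
      if n = l then (M : ℂ) else 0 := by
  have hiff : (n : ZMod M) - l = 0 ↔ n = l := by
    rw [sub_eq_zero, ZMod.natCast_eq_natCast_iff]
    exact ⟨fun h => h.eq_of_lt_of_lt hn hl, fun h => h ▸ rfl⟩
  have horth := AddChar.sum_mulShift ((n : ZMod M) - l) (ZMod.isPrimitive_stdAddChar M)
  simp only [hiff, ZMod.card] at horth
  rw [← Nat.cast_zero, ← Nat.cast_ite, ← horth]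
  refine Finset.sum_congr rfl fun a _ => ?_
  rw [map_pow, ← AddChar.map_neg_eq_conj, neg_neg, ← AddChar.map_nsmul_eq_pow,
    ← AddChar.map_nsmul_eq_pow, ← AddChar.map_add_eq_mul, nsmul_eq_mul, nsmul_eq_mul]
  congr 1
  ring

section Algebra

variable {A : Type*} [Ring A] [Algebra ℂ A]

/-- The Fourier localizer of `U` at the `M`-th root of unity `ζ = stdAddChar a`: the average of
`(ζ⁻¹ U) ^ n` over `n < M`, an approximate spectral projection of `U` near `ζ`. -/
noncomputable def fourierLocalizer (U : A) (a : ZMod M) : A :=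
  (M : ℂ)⁻¹ • ∑ n ∈ Finset.range M, (ZMod.stdAddChar (-a) : ℂ) ^ n • U ^ n

lemma fourierLocalizer_mul_sub (U : A) (a : ZMod M) :
    fourierLocalizer U a * (U - (ZMod.stdAddChar a : ℂ) • 1) =
      ((M : ℂ)⁻¹ * ZMod.stdAddChar a) • (U ^ M - 1) := by
  have hfactor : U - (ZMod.stdAddChar a : ℂ) • 1 =
      (ZMod.stdAddChar a : ℂ) • ((ZMod.stdAddChar (-a) : ℂ) • U - 1) := by
    rw [smul_sub, smul_smul, stdAddChar_mul_stdAddChar_neg, one_smul]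
  simp only [fourierLocalizer, ← smul_pow]
  rw [hfactor, smul_mul_smul_comm, geom_sum_mul, smul_pow, stdAddChar_pow_modulus, one_smul]

lemma lie_fourierLocalizer (U X : A) (a : ZMod M) :
    ⁅fourierLocalizer U a, X⁆ =
      (M : ℂ)⁻¹ • ∑ n ∈ Finset.range M, (ZMod.stdAddChar (-a) : ℂ) ^ n • ⁅U ^ n, X⁆ := by
  simp only [fourierLocalizer, Ring.lie_def, smul_mul_assoc, mul_smul_comm, Finset.sum_mul,
    Finset.mul_sum, smul_sub, Finset.sum_sub_distrib]

lemma commute_fourierLocalizer {U X : A} (h : Commute U X) (a : ZMod M) :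
    Commute (fourierLocalizer U a) X :=
  (Commute.sum_left _ _ _ fun n _ => (h.pow_left n).smul_left _).smul_left _

/-- The joint Fourier localizer of a tuple `U`: the ordered product of the Fourier localizers of
the `U j` at the roots of unity indexed by `a j`. -/
noncomputable def jointLocalizer (U : Fin d → A) (a : Fin d → ZMod M) : A :=
  (List.ofFn fun j => fourierLocalizer (U j) (a j)).prod

lemma jointLocalizer_cons (U : Fin (d + 1) → A) (b : ZMod M) (a : Fin d → ZMod M) :
    jointLocalizer U (Fin.cons b a : Fin (d + 1) → ZMod M) =
      fourierLocalizer (U 0) b * jointLocalizer (Fin.tail U) a := by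
  simp [jointLocalizer, List.ofFn_succ, Fin.tail]

lemma commute_jointLocalizer {U : Fin d → A} {X : A} (h : ∀ j, Commute (U j) X)
    (a : Fin d → ZMod M) : Commute (jointLocalizer U a) X := by
  refine Commute.list_prod_left _ _ fun Y hY => ?_
  obtain ⟨j, rfl⟩ := List.mem_ofFn.1 hY
  exact commute_fourierLocalizer (h j) (a j)

end Algebra

variable {H : Type*} [SeminormedAddCommGroup H] [InnerProductSpace ℂ H]

lemma sum_norm_sq_fourier_average (u : ℕ → H) :
    ∑ a : ZMod M, ‖(M : ℂ)⁻¹ • ∑ n ∈ Finset.range M, (ZMod.stdAddChar (-a) : ℂ) ^ n • u n‖ ^ 2 =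
      (M : ℝ)⁻¹ * ∑ n ∈ Finset.range M, ‖u n‖ ^ 2 := by
  have hparseval := sum_norm_sq_sum_smul (s := Finset.range M) (c := M)
    (B := fun (a : ZMod M) n => (ZMod.stdAddChar (-a) : ℂ) ^ n) (fun n hn l hl => by
      simpa only [RCLike.ofReal_natCast] using
        sum_conj_stdAddChar_pow_mul_pow (Finset.mem_range.1 hn) (Finset.mem_range.1 hl)) u
  simp only [norm_smul, mul_pow, ← Finset.mul_sum, hparseval, norm_inv, Complex.norm_natCast]
  field_simp

lemma isQuadraticPartition_fourierLocalizer {U : H →L[ℂ] H} (hU : ∀ v, ‖U v‖ = ‖v‖) :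
    IsQuadraticPartition (fourierLocalizer (M := M) U) := fun v => by
  have h := sum_norm_sq_fourier_average (M := M) fun n => (U ^ n) v
  simp only [norm_pow_apply_of_isometry hU, Finset.sum_const, Finset.card_range, nsmul_eq_mul] at h
  rw [inv_mul_cancel_left₀ (NeZero.ne (M : ℝ))] at h
  simpa only [fourierLocalizer, smul_apply, sum_apply] using h

lemma norm_column_fourierLocalizer_mul_sub_le {U : H →L[ℂ] H} (hU : ∀ v, ‖U v‖ = ‖v‖) :
    ‖column fun a : ZMod M => fourierLocalizer U a * (U - (ZMod.stdAddChar a : ℂ) • 1)‖ ≤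
      2 / √M := by
  refine norm_column_le (by positivity) fun v => ?_
  have hpow : ‖(U ^ M) v - v‖ ≤ 2 * ‖v‖ :=
    (norm_sub_le _ _).trans_eq (by rw [norm_pow_apply_of_isometry hU, two_mul])
  calc ∑ a : ZMod M, ‖(fourierLocalizer U a * (U - (ZMod.stdAddChar a : ℂ) • 1)) v‖ ^ 2
      = (M : ℝ)⁻¹ * ‖(U ^ M) v - v‖ ^ 2 := by
        simp only [fourierLocalizer_mul_sub, smul_apply, sub_apply, one_apply_eq_self, norm_smul,
          norm_mul, norm_stdAddChar, mul_one, mul_pow, norm_inv, Complex.norm_natCast,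
          Finset.sum_const, Finset.card_univ, ZMod.card, nsmul_eq_mul]
        field_simp
    _ ≤ (M : ℝ)⁻¹ * (2 * ‖v‖) ^ 2 := by gcongr
    _ = (2 / √M) ^ 2 * ‖v‖ ^ 2 := by
        rw [div_pow, Real.sq_sqrt (Nat.cast_nonneg M)]
        ring

lemma norm_column_lie_fourierLocalizer_le {U : H →L[ℂ] H} (hU : ∀ v, ‖U v‖ = ‖v‖)
    (X : H →L[ℂ] H) :
    ‖column fun a : ZMod M => ⁅fourierLocalizer U a, X⁆‖ ≤ M * ‖⁅U, X⁆‖ := by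
  have hU1 : ‖U‖ ≤ 1 := U.opNorm_le_bound zero_le_one fun v => by rw [one_mul, hU]
  refine norm_column_le (by positivity) fun v => ?_
  calc ∑ a : ZMod M, ‖⁅fourierLocalizer U a, X⁆ v‖ ^ 2
      = (M : ℝ)⁻¹ * ∑ n ∈ Finset.range M, ‖⁅U ^ n, X⁆ v‖ ^ 2 := by
        simp only [lie_fourierLocalizer, smul_apply, sum_apply]
        exact sum_norm_sq_fourier_average fun n => ⁅U ^ n, X⁆ v
    _ ≤ (M : ℝ)⁻¹ * ∑ n ∈ Finset.range M, (M * ‖⁅U, X⁆‖ * ‖v‖) ^ 2 := by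
        gcongr with n hn
        refine ContinuousLinearMap.le_of_opNorm_le _ ((norm_lie_pow_le hU1 X n).trans ?_) v
        gcongr
        exact (Finset.mem_range.1 hn).le
    _ = (M * ‖⁅U, X⁆‖) ^ 2 * ‖v‖ ^ 2 := by
        rw [Finset.sum_const, Finset.card_range, nsmul_eq_mul,
          inv_mul_cancel_left₀ (NeZero.ne (M : ℝ)), mul_pow]

lemma isQuadraticPartition_jointLocalizer {U : Fin d → H →L[ℂ] H} (hU : ∀ j v, ‖U j v‖ = ‖v‖) :
    IsQuadraticPartition (jointLocalizer (M := M) U) := by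
  induction d with
  | zero => simp [IsQuadraticPartition, jointLocalizer]
  | succ d ih =>
    intro v
    have hprod := (isQuadraticPartition_fourierLocalizer (M := M) (hU 0)).prod_mul
      (ih (U := Fin.tail U) fun j => hU j.succ)
    rw [← hprod v, ← (Fin.consEquiv fun _ => ZMod M).sum_comp]
    exact Finset.sum_congr rfl fun p _ =>
      congrArg (fun T : H →L[ℂ] H => ‖T v‖ ^ 2) (jointLocalizer_cons U p.1 p.2)

lemma norm_column_lie_jointLocalizer_le {U : Fin d → H →L[ℂ] H} (hU : ∀ j v, ‖U j v‖ = ‖v‖)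
    {X : H →L[ℂ] H} {ε : ℝ} (hX : ∀ j, ‖⁅U j, X⁆‖ ≤ ε) :
    ‖column fun a : Fin d → ZMod M => ⁅jointLocalizer U a, X⁆‖ ≤ d * (M * ε) := by
  induction d with
  | zero => exact norm_column_le (by simp) fun v => by simp [jointLocalizer, Ring.lie_def]
  | succ d ih =>
    set Q : ZMod M → H →L[ℂ] H := fourierLocalizer (U 0)
    set W : (Fin d → ZMod M) → H →L[ℂ] H := jointLocalizer (Fin.tail U)
    have hQ : IsQuadraticPartition Q := isQuadraticPartition_fourierLocalizer (hU 0)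
    have hW : IsQuadraticPartition W := isQuadraticPartition_jointLocalizer fun j => hU j.succ
    have hQX : ‖column fun b => ⁅Q b, X⁆‖ ≤ M * ε :=
      (norm_column_lie_fourierLocalizer_le (hU 0) X).trans (by gcongr; exact hX 0)
    have hWX : ‖column fun a => ⁅W a, X⁆‖ ≤ d * (M * ε) :=
      ih (fun j => hU j.succ) fun j => hX j.succ
    have hsplit (p : ZMod M × (Fin d → ZMod M)) :
        ⁅jointLocalizer U (Fin.cons p.1 p.2 : Fin (d + 1) → ZMod M), X⁆ =
          Q p.1 * ⁅W p.2, X⁆ + ⁅Q p.1, X⁆ * W p.2 := by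
      rw [jointLocalizer_cons]
      simp only [Ring.lie_def]
      noncomm_ring
    calc ‖column fun a : Fin (d + 1) → ZMod M => ⁅jointLocalizer U a, X⁆‖
        ≤ ‖column Q‖ * ‖column fun a => ⁅W a, X⁆‖ + ‖column fun b => ⁅Q b, X⁆‖ * ‖column W‖ :=
          norm_column_le_of_equiv_mul_add_mul (Fin.consEquiv fun _ => ZMod M) hsplit
      _ ≤ 1 * (d * (M * ε)) + M * ε * 1 := by
          gcongr
          exacts [hQ.norm_column_le_one, (norm_column_nonneg _).trans hQX, hW.norm_column_le_one]
      _ = (d + 1 : ℕ) * (M * ε) := by push_cast; ring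

/-- The other factors of the localizer commute with `U 0` only approximately, whence the second
summand. -/
lemma norm_column_jointLocalizer_mul_zero_sub_le {U : Fin (d + 1) → H →L[ℂ] H}
    (hU : ∀ j v, ‖U j v‖ = ‖v‖) {ε : ℝ} (hcomm : ∀ j : Fin d, ‖⁅U j.succ, U 0⁆‖ ≤ ε) :
    ‖column fun a : Fin (d + 1) → ZMod M =>
        jointLocalizer U a * (U 0 - (ZMod.stdAddChar (a 0) : ℂ) • 1)‖ ≤
      2 / √M + d * (M * ε) := by
  set Q : ZMod M → H →L[ℂ] H := fourierLocalizer (U 0)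
  set W : (Fin d → ZMod M) → H →L[ℂ] H := jointLocalizer (Fin.tail U)
  set D : ZMod M → H →L[ℂ] H := fun b => Q b * (U 0 - (ZMod.stdAddChar b : ℂ) • 1)
  have hQ : ‖column Q‖ ≤ 1 := (isQuadraticPartition_fourierLocalizer (hU 0)).norm_column_le_one
  have hW : ‖column W‖ ≤ 1 :=
    (isQuadraticPartition_jointLocalizer fun j => hU j.succ).norm_column_le_one
  have hD : ‖column D‖ ≤ 2 / √M := norm_column_fourierLocalizer_mul_sub_le (hU 0)
  have hWU : ‖column fun a => ⁅W a, U 0⁆‖ ≤ d * (M * ε) :=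
    norm_column_lie_jointLocalizer_le (fun j => hU j.succ) hcomm
  have hsplit (p : ZMod M × (Fin d → ZMod M)) :
      jointLocalizer U (Fin.cons p.1 p.2 : Fin (d + 1) → ZMod M) *
          (U 0 - (ZMod.stdAddChar p.1 : ℂ) • 1) =
        D p.1 * W p.2 + Q p.1 * ⁅W p.2, U 0⁆ := by
    rw [jointLocalizer_cons]
    simp only [D, Q, W, Ring.lie_def, mul_sub, sub_mul, mul_assoc, mul_smul_comm,
      smul_mul_assoc, mul_one]
    abel
  calc _ ≤ ‖column D‖ * ‖column W‖ + ‖column Q‖ * ‖column fun a => ⁅W a, U 0⁆‖ :=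
        norm_column_le_of_equiv_mul_add_mul (Fin.consEquiv fun _ => ZMod M) hsplit
    _ ≤ 2 / √M * 1 + 1 * (d * (M * ε)) := by gcongr
    _ = 2 / √M + d * (M * ε) := by ring

lemma norm_column_jointLocalizer_mul_sub_le {U : Fin d → H →L[ℂ] H}
    (hU : ∀ j v, ‖U j v‖ = ‖v‖) {ε : ℝ} (hcomm : ∀ j l, ‖⁅U j, U l⁆‖ ≤ ε) (j : Fin d) :
    ‖column fun a : Fin d → ZMod M =>
        jointLocalizer U a * (U j - (ZMod.stdAddChar (a j) : ℂ) • 1)‖ ≤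
      2 / √M + d * (M * ε) := by
  have hε : 0 ≤ ε := (norm_nonneg _).trans (hcomm j j)
  induction d with
  | zero => exact j.elim0
  | succ d ih =>
    suffices h : ‖column fun a : Fin (d + 1) → ZMod M =>
        jointLocalizer U a * (U j - (ZMod.stdAddChar (a j) : ℂ) • 1)‖ ≤
        2 / √M + d * (M * ε) by
      refine h.trans ?_
      gcongr
      exact d.le_succ
    refine Fin.cases ?_ (fun j => ?_) j
    · exact norm_column_jointLocalizer_mul_zero_sub_le hU fun j => hcomm j.succ 0
    · set Q : ZMod M → H →L[ℂ] H := fourierLocalizer (U 0)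
      set R : (Fin d → ZMod M) → H →L[ℂ] H := fun a =>
        jointLocalizer (Fin.tail U) a * (U j.succ - (ZMod.stdAddChar (a j) : ℂ) • 1)
      have hQ : ‖column Q‖ ≤ 1 :=
        (isQuadraticPartition_fourierLocalizer (hU 0)).norm_column_le_one
      have hR : ‖column R‖ ≤ 2 / √M + d * (M * ε) :=
        ih (fun j => hU j.succ) (fun j l => hcomm j.succ l.succ) j
      have hassoc (p : ZMod M × (Fin d → ZMod M)) :
          jointLocalizer U (Fin.cons p.1 p.2 : Fin (d + 1) → ZMod M) *
              (U j.succ - (ZMod.stdAddChar (p.2 j) : ℂ) • 1) = Q p.1 * R p.2 := by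
        rw [jointLocalizer_cons, mul_assoc]
      calc _ ≤ ‖column Q‖ * ‖column R‖ :=
            norm_column_le_of_equiv_mul (Fin.consEquiv fun _ => ZMod M) hassoc
        _ ≤ 1 * (2 / √M + d * (M * ε)) := by gcongr
        _ = 2 / √M + d * (M * ε) := one_mul _

end FourierLocalizer

section SelfAdjoint

variable {H : Type*} [NormedAddCommGroup H] [InnerProductSpace ℂ H] [CompleteSpace H]
  {A : H →L[ℂ] H}

lemma inner_mul_self_apply_self (hA : IsSelfAdjoint A) (v : H) :
    inner ℂ ((A * A) v) v = (‖A v‖ ^ 2 : ℝ) := by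
  rw [mul_apply_eq_comp, ← ContinuousLinearMap.adjoint_inner_right, hA.adjoint_eq,
    inner_self_eq_norm_sq_to_K, Complex.ofReal_pow]
  rfl

lemma norm_apply_sq_of_mul_self_eq (hA : IsSelfAdjoint A) {r : ℝ}
    (hAA : A * A = (r : ℂ) • (1 : H →L[ℂ] H)) (v : H) : ‖A v‖ ^ 2 = r * ‖v‖ ^ 2 := by
  rw [← Complex.ofReal_inj, ← inner_mul_self_apply_self hA, hAA, smul_apply, one_apply_eq_self,
    inner_smul_left, Complex.conj_ofReal, inner_self_eq_norm_sq_to_K, Complex.ofReal_mul,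
    Complex.ofReal_pow]
  rfl

lemma isPositive_sq_sub_smul_one (hA : IsSelfAdjoint A) {C : ℝ}
    (h : ∀ v, C * ‖v‖ ^ 2 ≤ ‖A v‖ ^ 2) : (A ^ 2 - (C : ℂ) • (1 : H →L[ℂ] H)).IsPositive := by
  refine ContinuousLinearMap.isPositive_def'.2 ⟨?_, fun v => ?_⟩
  · exact (hA.pow 2).sub (IsSelfAdjoint.smul (Complex.conj_ofReal C) (.one _))
  · rw [ContinuousLinearMap.reApplyInnerSelf_apply, sub_apply, inner_sub_left, sq,
      inner_mul_self_apply_self hA, smul_apply, one_apply_eq_self, inner_smul_left,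
      Complex.conj_ofReal, map_sub, sub_nonneg, RCLike.re_to_complex, Complex.re_ofReal_mul,
      ← RCLike.re_to_complex, inner_self_eq_norm_sq]
    exact h v

lemma isUnit_of_le_norm_apply_sq (hA : IsSelfAdjoint A) {C : ℝ} (hC : 0 < C)
    (h : ∀ v, C * ‖v‖ ^ 2 ≤ ‖A v‖ ^ 2) : IsUnit A := by
  rw [← isUnit_pow_iff two_ne_zero]
  refine ContinuousLinearMap.isUnit_of_forall_le_norm_inner_map _ (c := ⟨C, hC.le⟩) hC fun v => ?_
  rw [sq A, inner_mul_self_apply_self hA, Complex.norm_real, Real.norm_of_nonneg (sq_nonneg _),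
    mul_comm]
  exact h v

end SelfAdjoint

section UnitaryParts

variable {H : Type*} [NormedAddCommGroup H] [InnerProductSpace ℂ H] [CompleteSpace H]
  {U : H →L[ℂ] H}

lemma isSelfAdjoint_xPart (U : H →L[ℂ] H) : IsSelfAdjoint (xPart U) := by
  have h : star ((2 * Complex.I)⁻¹) = -(2 * Complex.I)⁻¹ := by
    simp [mul_comm]
  rw [IsSelfAdjoint, xPart, star_smul, star_sub, star_star, h, neg_smul, ← smul_neg, neg_sub]

lemma isSelfAdjoint_yPart (U : H →L[ℂ] H) : IsSelfAdjoint (yPart U) := by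
  rw [IsSelfAdjoint, yPart, star_smul, star_add, star_star, add_comm, star_inv₀, star_ofNat]

lemma xPart_sub (U V : H →L[ℂ] H) : xPart (U - V) = xPart U - xPart V := by
  rw [xPart, xPart, xPart, ← smul_sub, star_sub, sub_sub_sub_comm]

lemma yPart_sub (U V : H →L[ℂ] H) : yPart (U - V) = yPart U - yPart V := by
  rw [yPart, yPart, yPart, ← smul_sub, star_sub, add_sub_add_comm]

lemma xPart_smul_one (z : ℂ) : xPart (z • (1 : H →L[ℂ] H)) = (z.im : ℂ) • 1 := by
  rw [xPart, star_smul, star_one, ← sub_smul, smul_smul, RCLike.star_def, Complex.sub_conj]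
  congr 1
  field_simp
  push_cast
  ring

lemma yPart_smul_one (z : ℂ) : yPart (z • (1 : H →L[ℂ] H)) = (z.re : ℂ) • 1 := by
  rw [yPart, star_smul, star_one, ← add_smul, smul_smul, RCLike.star_def, Complex.add_conj]
  congr 1
  push_cast
  ring

lemma commute_xPart {X : H →L[ℂ] H} (h : Commute U X) (h' : Commute (star U) X) :
    Commute (xPart U) X :=
  (h.sub_left h').smul_left _

lemma commute_yPart {X : H →L[ℂ] H} (h : Commute U X) (h' : Commute (star U) X) :
    Commute (yPart U) X :=
  (h.add_left h').smul_left _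

variable {ι : Type*} [Fintype ι] {P : ι → H →L[ℂ] H} {z : ι → ℂ} {δ : ℝ}

lemma norm_column_mul_star_sub_le (hU : U ∈ unitary (H →L[ℂ] H)) (hz : ∀ a, ‖z a‖ = 1)
    (hδ : ‖column fun a => P a * (U - z a • 1)‖ ≤ δ) :
    ‖column fun a => P a * star (U - z a • 1)‖ ≤ δ := by
  have hstar (a : ι) :
      P a * star (U - z a • 1) = -star (z a) • (P a * (U - z a • 1) * star U) := by
    have hzz : star (z a) * z a = 1 := by
      rw [RCLike.star_def, RCLike.conj_mul, hz, RCLike.ofReal_one, one_pow]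
    rw [star_sub, star_smul, star_one, mul_assoc, sub_mul, Unitary.mul_star_self_of_mem hU,
      smul_mul_assoc, one_mul, ← mul_smul_comm, smul_sub, smul_smul, neg_mul, hzz]
    congr 1
    module
  calc ‖column fun a => P a * star (U - z a • 1)‖
      ≤ 1 * ‖column fun a => (P a * (U - z a • 1) * star U : H →L[ℂ] H)‖ :=
        norm_column_le_mul zero_le_one fun a v => by
          rw [hstar, smul_apply, norm_smul, norm_neg, norm_star, hz]
    _ ≤ δ * 1 := by
        rw [one_mul]
        refine (norm_column_comp_le _ _).trans ?_
        gcongr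
        · exact (norm_column_nonneg _).trans hδ
        · exact ContinuousLinearMap.opNorm_le_bound _ zero_le_one fun v => by
            rw [ContinuousLinearMap.norm_map_of_mem_unitary (Unitary.star_mem hU), one_mul]
    _ = δ := mul_one δ

lemma norm_column_mul_xPart_sub_le (hU : U ∈ unitary (H →L[ℂ] H)) (hz : ∀ a, ‖z a‖ = 1)
    (hδ : ‖column fun a => P a * (U - z a • 1)‖ ≤ δ) :
    ‖column fun a => P a * xPart (U - z a • 1)‖ ≤ δ := by
  have hstar := norm_column_mul_star_sub_le hU hz hδ
  simp only [xPart, mul_smul_comm, mul_sub (P _) (U - _)]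
  rw [norm_column_smul]
  calc _ ≤ ‖(2 * Complex.I)⁻¹‖ * (δ + δ) := by
        gcongr
        exact (norm_column_sub_le _ _).trans (add_le_add hδ hstar)
    _ = δ := by
        rw [norm_inv, norm_mul, Complex.norm_I, Complex.norm_two]
        ring

lemma norm_column_mul_yPart_sub_le (hU : U ∈ unitary (H →L[ℂ] H)) (hz : ∀ a, ‖z a‖ = 1)
    (hδ : ‖column fun a => P a * (U - z a • 1)‖ ≤ δ) :
    ‖column fun a => P a * yPart (U - z a • 1)‖ ≤ δ := by
  have hstar := norm_column_mul_star_sub_le hU hz hδ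
  simp only [yPart, mul_smul_comm, mul_add]
  rw [norm_column_smul]
  calc _ ≤ ‖(2 : ℂ)⁻¹‖ * (δ + δ) := by
        gcongr
        exact (norm_column_add_le _ _).trans (add_le_add hδ hstar)
    _ = δ := by
        rw [norm_inv, Complex.norm_two]
        ring

end UnitaryParts

section WilsonDirac

variable {H : Type*} [NormedAddCommGroup H] [InnerProductSpace ℂ H] [CompleteSpace H] {d : ℕ}

namespace CliffordSystem

lemma norm_c_apply (cs : CliffordSystem H d) (j : Fin d) (v : H) : ‖cs.c j v‖ = ‖v‖ := by
  have hsq : cs.c j * cs.c j = -1 := by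
    have h := cs.c_rel j j
    rw [if_pos rfl, ← two_smul ℂ, neg_smul, ← smul_neg] at h
    exact smul_right_injective _ two_ne_zero h
  refine ContinuousLinearMap.norm_map_of_mem_unitary (𝕜 := ℂ) ?_ v
  rw [Unitary.mem_iff, cs.c_skew, neg_mul, mul_neg, hsq, neg_neg]
  exact ⟨rfl, rfl⟩

lemma norm_γ_apply (cs : CliffordSystem H d) (v : H) : ‖cs.γ v‖ = ‖v‖ := by
  refine ContinuousLinearMap.norm_map_of_mem_unitary (𝕜 := ℂ) ?_ v
  rw [Unitary.mem_iff, cs.γ_sa, cs.γ_sq]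
  exact ⟨rfl, rfl⟩

lemma commute_star_c (cs : CliffordSystem H d) {U : H →L[ℂ] H} {l : Fin d}
    (h : Commute U (cs.c l)) : Commute (star U) (cs.c l) := by
  have hstar := h.star_star
  rwa [cs.c_skew, Commute.neg_right_iff] at hstar

lemma commute_star_γ (cs : CliffordSystem H d) {U : H →L[ℂ] H} (h : Commute U cs.γ) :
    Commute (star U) cs.γ :=
  cs.γ_sa ▸ h.star_star

lemma sum_smul_c_mul_self (cs : CliffordSystem H d) (s : Fin d → ℂ) :
    (∑ j, s j • cs.c j) * (∑ j, s j • cs.c j) = -((∑ j, s j ^ 2) • 1) := by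
  set A := ∑ j, s j • cs.c j with hA
  have hexpand : A * A = ∑ j, ∑ l, (s j * s l) • (cs.c j * cs.c l) := by
    simp only [hA, Finset.sum_mul_sum, smul_mul_smul_comm]
  have hswap : A * A = ∑ j, ∑ l, (s j * s l) • (cs.c l * cs.c j) := by
    rw [hexpand, Finset.sum_comm]
    simp only [mul_comm]
  refine smul_right_injective _ (two_ne_zero (α := ℂ)) ?_
  calc (2 : ℂ) • (A * A)
      = ∑ j, ∑ l, (s j * s l) • (cs.c j * cs.c l + cs.c l * cs.c j) := by
        rw [two_smul]
        nth_rewrite 1 [hexpand]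
        rw [hswap]
        simp only [← Finset.sum_add_distrib, ← smul_add]
    _ = (2 : ℂ) • -((∑ j, s j ^ 2) • 1) := by
        simp only [cs.c_rel, smul_ite, smul_zero, Finset.sum_ite_eq, Finset.mem_univ, if_true,
          smul_smul, ← Finset.sum_smul, ← Finset.sum_mul, ← sq]
        module

lemma sum_smul_c_add_smul_γ_mul_self (cs : CliffordSystem H d) (s : Fin d → ℂ) (μ : ℂ) :
    (∑ j, s j • cs.c j + μ • cs.γ) * (∑ j, s j • cs.c j + μ • cs.γ) =
      (μ ^ 2 - ∑ j, s j ^ 2) • 1 := by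
  have hanti : cs.γ * (∑ j, s j • cs.c j) = -((∑ j, s j • cs.c j) * cs.γ) := by
    simp only [Finset.mul_sum, Finset.sum_mul, ← Finset.sum_neg_distrib, mul_smul_comm,
      smul_mul_assoc, cs.γ_anticomm, smul_neg]
  rw [add_mul, mul_add, mul_add, sum_smul_c_mul_self, smul_mul_assoc, hanti, mul_smul_comm,
    smul_mul_smul_comm, cs.γ_sq]
  module

end CliffordSystem

variable (cs : CliffordSystem H d) {U : Fin d → H →L[ℂ] H}

lemma isSelfAdjoint_wilsonDirac (hc : ∀ j, Commute (U j) (cs.c j))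
    (hγ : ∀ j, Commute (U j) cs.γ) (κ m : ℝ) : IsSelfAdjoint (wilsonDirac cs U κ m) := by
  have hkinetic (j : Fin d) : star (Complex.I • (xPart (U j) * cs.c j)) =
      Complex.I • (xPart (U j) * cs.c j) := by
    rw [star_smul, star_mul, cs.c_skew, (isSelfAdjoint_xPart _).star_eq, neg_mul,
      ← (commute_xPart (hc j) (cs.commute_star_c (hc j))).eq, RCLike.star_def, Complex.conj_I,
      neg_smul, smul_neg, neg_neg]
  have hmass :
      Commute cs.γ ((κ : ℂ) • (∑ j, (yPart (U j) - 1)) + (m : ℂ) • (1 : H →L[ℂ] H)) :=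
    .add_right (.smul_right (.sum_right _ _ _ fun j _ =>
        (commute_yPart (hγ j) (cs.commute_star_γ (hγ j))).symm.sub_right (.one_right _)) _)
      ((Commute.one_right _).smul_right _)
  refine .add (.smul (Complex.conj_ofReal κ) ?_) ((IsSelfAdjoint.commute_iff cs.γ_sa ?_).1 hmass)
  · exact (star_sum _ _).trans (Finset.sum_congr rfl fun j _ => hkinetic j)
  · refine .add (.smul (Complex.conj_ofReal κ) ?_) (.smul (Complex.conj_ofReal m) (.one _))
    exact (star_sum _ _).trans (Finset.sum_congr rfl fun j _ =>
      ((isSelfAdjoint_yPart _).sub (.one _)).star_eq)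

lemma wilsonDirac_smul_one (z : Fin d → ℂ) (κ m : ℝ) :
    wilsonDirac cs (fun j => z j • 1) κ m =
      ∑ j, (κ * (Complex.I * (z j).im)) • cs.c j +
        ((κ * ∑ j, ((z j).re - 1) + m : ℝ) : ℂ) • cs.γ := by
  have hmass : (κ : ℂ) • (∑ j, (((z j).re : ℂ) • (1 : H →L[ℂ] H) - 1)) + (m : ℂ) • 1 =
      ((κ * ∑ j, ((z j).re - 1) + m : ℝ) : ℂ) • (1 : H →L[ℂ] H) := by
    push_cast
    rw [add_smul, mul_smul, Finset.sum_smul]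
    simp only [sub_smul, one_smul]
  simp only [wilsonDirac, xPart_smul_one, yPart_smul_one, hmass]
  simp only [Finset.smul_sum, smul_mul_assoc, one_mul, mul_smul_comm, mul_one, smul_smul]

lemma wilsonDirac_smul_one_mul_self (z : Fin d → ℂ) (κ m : ℝ) :
    wilsonDirac cs (fun j => z j • 1) κ m * wilsonDirac cs (fun j => z j • 1) κ m =
      ((κ ^ 2 * ∑ j, (z j).im ^ 2 + (κ * ∑ j, ((z j).re - 1) + m) ^ 2 : ℝ) : ℂ) • 1 := by
  rw [wilsonDirac_smul_one, cs.sum_smul_c_add_smul_γ_mul_self]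
  congr 1
  push_cast
  simp only [mul_pow, Complex.I_sq, Finset.mul_sum, neg_mul, mul_neg, one_mul,
    Finset.sum_neg_distrib]
  ring

lemma sqrt_sInf_fmSq_mul_norm_le {z : Fin d → ℂ} (hz : ∀ j, ‖z j‖ = 1) (m : ℝ) (v : H) :
    √(sInf (Set.range (fmSq d m))) * ‖v‖ ≤ ‖wilsonDirac cs (fun j => z j • 1) 1 m v‖ := by
  have hsa : IsSelfAdjoint (wilsonDirac cs (fun j => z j • 1) 1 m) :=
    isSelfAdjoint_wilsonDirac cs (fun j => (Commute.one_left _).smul_left _)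
      (fun j => (Commute.one_left _).smul_left _) 1 m
  have hnorm := norm_apply_sq_of_mul_self_eq hsa (wilsonDirac_smul_one_mul_self cs z 1 m) v
  rw [one_pow, one_mul, one_mul] at hnorm
  rw [← Real.sqrt_sq (norm_nonneg (wilsonDirac _ _ _ _ v)), hnorm,
    Real.sqrt_mul' _ (sq_nonneg _), Real.sqrt_sq (norm_nonneg v)]
  gcongr
  exact sInf_fmSq_le_of_norm_eq_one m hz

lemma wilsonDirac_sub (U V : Fin d → H →L[ℂ] H) (κ m : ℝ) :
    wilsonDirac cs U κ m - wilsonDirac cs V κ m =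
      (κ : ℂ) • (∑ j, Complex.I • (xPart (U j - V j) * cs.c j) +
        ∑ j, cs.γ * yPart (U j - V j)) := by
  simp only [wilsonDirac, xPart_sub, yPart_sub, sub_mul, mul_sub, smul_sub,
    Finset.sum_sub_distrib, mul_add, mul_smul_comm, smul_add, Finset.mul_sum]
  abel

lemma norm_column_mul_wilsonDirac_sub_le (hU : ∀ j, U j ∈ unitary (H →L[ℂ] H))
    {ι : Type*} [Fintype ι] {P : ι → H →L[ℂ] H} {z : ι → Fin d → ℂ} {δ : ℝ}
    (hP : ∀ a, Commute (P a) cs.γ) (hz : ∀ a j, ‖z a j‖ = 1)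
    (hδ : ∀ j, ‖column fun a => P a * (U j - z a j • 1)‖ ≤ δ) (κ m : ℝ) :
    ‖column fun a =>
        P a * (wilsonDirac cs U κ m - wilsonDirac cs (fun j => z a j • 1) κ m)‖ ≤
      |κ| * (2 * d * δ) := by
  have hx (j : Fin d) : ‖column fun a => P a * xPart (U j - z a j • 1) * cs.c j‖ ≤ δ := by
    have hcj : ‖cs.c j‖ ≤ 1 :=
      ContinuousLinearMap.opNorm_le_bound _ zero_le_one fun v => by rw [cs.norm_c_apply, one_mul]
    have hX := norm_column_mul_xPart_sub_le (hU j) (fun a => hz a j) (hδ j)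
    calc _ ≤ δ * 1 := (norm_column_comp_le _ _).trans
          (mul_le_mul hX hcj (norm_nonneg _) ((norm_column_nonneg _).trans hX))
      _ = δ := mul_one δ
  have hy (j : Fin d) : ‖column fun a => cs.γ * (P a * yPart (U j - z a j • 1))‖ ≤ δ :=
    calc _ ≤ 1 * ‖column fun a => P a * yPart (U j - z a j • 1)‖ :=
          norm_column_le_mul zero_le_one fun a v => by
            rw [mul_apply_eq_comp, cs.norm_γ_apply, one_mul]
      _ ≤ δ := by
          rw [one_mul]
          exact norm_column_mul_yPart_sub_le (hU j) (fun a => hz a j) (hδ j)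
  have hsplit (a : ι) :
      P a * (wilsonDirac cs U κ m - wilsonDirac cs (fun j => z a j • 1) κ m) =
        (κ : ℂ) • (∑ j, Complex.I • (P a * xPart (U j - z a j • 1) * cs.c j) +
          ∑ j, cs.γ * (P a * yPart (U j - z a j • 1))) := by
    simp only [wilsonDirac_sub, mul_smul_comm, mul_add, Finset.mul_sum, ← mul_assoc, (hP a).eq]
  simp only [hsplit]
  rw [norm_column_smul, Complex.norm_real, Real.norm_eq_abs]
  gcongr
  calc _ ≤ (∑ _j : Fin d, δ) + ∑ _j : Fin d, δ := by
        refine (norm_column_add_le _ _).trans (add_le_add ?_ ?_) <;>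
          refine (norm_column_sum_le _ _).trans (Finset.sum_le_sum fun j _ => ?_)
        · rw [norm_column_smul, Complex.norm_I, one_mul]
          exact hx j
        · exact hy j
    _ = 2 * d * δ := by
        rw [Finset.sum_const, Finset.card_univ, Fintype.card_fin, nsmul_eq_mul]
        ring

theorem sub_mul_norm_le_norm_wilsonDirac_apply (hU : ∀ j, U j ∈ unitary (H →L[ℂ] H))
    (hc : ∀ j l, Commute (U j) (cs.c l)) (hγ : ∀ j, Commute (U j) cs.γ) {ε : ℝ}
    (hcomm : ∀ j l, ‖⁅U j, U l⁆‖ ≤ ε) (M : ℕ) [NeZero M] (m : ℝ) (v : H) :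
    (√(sInf (Set.range (fmSq d m))) - 2 * d * (2 / √M + d * (M * ε))) * ‖v‖ ≤
      ‖wilsonDirac cs U 1 m v‖ := by
  have hiso (j : Fin d) (w : H) : ‖U j w‖ = ‖w‖ :=
    ContinuousLinearMap.norm_map_of_mem_unitary (hU j) w
  have hz (a : Fin d → ZMod M) (j : Fin d) : ‖(ZMod.stdAddChar (a j) : ℂ)‖ = 1 :=
    norm_stdAddChar (a j)
  have hPγ (a : Fin d → ZMod M) : Commute (jointLocalizer U a) cs.γ := commute_jointLocalizer hγ a
  have hPc (a : Fin d → ZMod M) (l : Fin d) : Commute (jointLocalizer U a) (cs.c l) :=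
    commute_jointLocalizer (fun j => hc j l) a
  have hdefect := norm_column_mul_wilsonDirac_sub_le cs hU hPγ hz
    (norm_column_jointLocalizer_mul_sub_le hiso hcomm) 1 m
  rw [abs_one, one_mul] at hdefect
  refine (isQuadraticPartition_jointLocalizer hiso).sub_mul_norm_le_norm_apply (Real.sqrt_nonneg _)
    (fun a => sqrt_sInf_fmSq_mul_norm_le cs (hz a) m) (fun a => ?_) hdefect v
  rw [wilsonDirac_smul_one]
  exact .add_right (.sum_right _ _ _ fun j _ => (hPc a j).smul_right _) ((hPγ a).smul_right _)

end WilsonDirac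

lemma exists_localization_scale (d : ℕ) {η : ℝ} (hη : 0 < η) :
    ∃ M : ℕ, M ≠ 0 ∧ ∃ ε > (0 : ℝ), 2 * d * (2 / √M + d * (M * ε)) ≤ η := by
  obtain ⟨M, hM⟩ := exists_nat_gt ((2 * d * (2 + d) / η) ^ 2)
  have hM0 : (0 : ℝ) < M := (sq_nonneg _).trans_lt hM
  refine ⟨M, Nat.cast_ne_zero.1 hM0.ne', (M * √M)⁻¹, by positivity, ?_⟩
  have hroot : 2 * d * (2 + d) / η ≤ √M := Real.le_sqrt_of_sq_le hM.le
  calc 2 * d * (2 / √M + d * (M * (M * √M)⁻¹)) = 2 * d * (2 + d) / √M := by field_simp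
    _ ≤ η := by rwa [div_le_comm₀ (by positivity) hη]

theorem statement0_general (d : ℕ) (m : ℝ) :
    (0 < sInf (Set.range (fmSq d m)) ↔ ∀ n : ℕ, n ≤ d → m ≠ 2 * n) ∧
    ∀ C : ℝ, 0 < C → C < sInf (Set.range (fmSq d m)) →
      ∃ ε > (0 : ℝ), ∀ (H : Type*) [NormedAddCommGroup H] [InnerProductSpace ℂ H]
        [CompleteSpace H],
        ∀ (cs : CliffordSystem H d) (U : Fin d → H →L[ℂ] H),
          (∀ j, U j ∈ unitary (H →L[ℂ] H)) →
          (∀ j l, Commute (U j) (cs.c l)) →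
          (∀ j, Commute (U j) cs.γ) →
          (∀ j l, ‖U j * U l - U l * U j‖ < ε) →
          (wilsonDirac cs U 1 m ^ 2 - ((C : ℝ) : ℂ) • (1 : H →L[ℂ] H)).IsPositive ∧
            IsUnit (wilsonDirac cs U 1 m) := by
  refine ⟨sInf_fmSq_pos_iff, fun C hC hCinf => ?_⟩
  obtain ⟨M, hM, ε, hε, hscale⟩ :=
    exists_localization_scale d (sub_pos.2 (Real.sqrt_lt_sqrt hC.le hCinf))
  have : NeZero M := ⟨hM⟩
  refine ⟨ε, hε, fun H _ _ _ cs U hU hc hγ hcomm => ?_⟩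
  have hbound (v : H) : C * ‖v‖ ^ 2 ≤ ‖wilsonDirac cs U 1 m v‖ ^ 2 := by
    rw [← Real.sq_sqrt hC.le, ← mul_pow]
    gcongr
    refine le_trans ?_ (sub_mul_norm_le_norm_wilsonDirac_apply cs hU hc hγ
      (fun j l => (hcomm j l).le) M m v)
    gcongr
    exact le_sub_comm.1 hscale
  have hsa := isSelfAdjoint_wilsonDirac cs (fun j => hc j j) hγ 1 m
  exact ⟨isPositive_sq_sub_smul_one hsa hbound, isUnit_of_le_norm_apply_sq hsa hC hbound⟩

/-- bottom of the spectrum of the universal massive Wilson--Dirac squared is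
positive, and quasi-representations with small enough commutators have `D(1,m)² ≥ C`. -/
theorem statement0 (d : ℕ) (hd : 1 ≤ d) (m : ℝ) (hm0 : 0 < m) (hm2 : m < 2) :
    0 < sInf (Set.range (fmSq d m)) ∧
    ∀ C : ℝ, 0 < C → C < sInf (Set.range (fmSq d m)) →
      ∃ ε > (0 : ℝ), ∀ (H : Type) [NormedAddCommGroup H] [InnerProductSpace ℂ H]
        [FiniteDimensional ℂ H],
        ∀ (cs : CliffordSystem H d) (U : Fin d → H →L[ℂ] H),
          (∀ j, U j ∈ unitary (H →L[ℂ] H)) →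
          (∀ j l, Commute (U j) (cs.c l)) →
          (∀ j, Commute (U j) cs.γ) →
          (∀ j l, ‖U j * U l - U l * U j‖ < ε) →
          (wilsonDirac cs U 1 m ^ 2 - ((C : ℝ) : ℂ) • (1 : H →L[ℂ] H)).IsPositive ∧
            IsUnit (wilsonDirac cs U 1 m) := by
  obtain ⟨hpos, hgap⟩ := statement0_general d m
  refine ⟨hpos.2 fun n _ hn => ?_, fun C hC hCinf => ?_⟩
  · have hn0 : (0 : ℝ) < n := by linarith
    have hn1 : (n : ℝ) < 1 := by linarith
    norm_cast at hn0 hn1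
    omega
  · obtain ⟨ε, hε, h⟩ := hgap C hC hCinf
    exact ⟨ε, hε, fun H _ _ _ => h H⟩
end

section
/- Fix an integer d ≥ 1 and a real number m with 0 < m < 2. Then there exists ε > 0 with the following property: for every finite-dimensional complex Hilbert space H, every Clifford system (c_1, …, c_d, γ) on H, and every norm-continuous path t ∈ [0,1] ↦ (U_1(t), …, U_d(t)) of d-tuples of unitaries on H, each commuting with every c_j and with γ and satisfying ‖U_j(t) U_l(t) − U_l(t) U_j(t)‖ < ε for all t, j, l, the operator D_t(1, m) built from (U_1(t), …, U_d(t)) is invertible for every t and the integer 𝐈(D_t(1, m)) is independent of t; moreover, if U_1(1), …, U_d(1) pairwise commute, then 𝐈(D_0(1, m)) = 0. -/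
/-! Write `U j = y j + i x j`. For scalar `U`, let `N` be the number of successes of independent
coins with success probabilities `(1 - y j) / 2`. The `j`-th coin has variance `x j ^ 2 / 4` and
`m - 2 * N` has mean `∑ j, (y j - 1) + m`, so
`∑ j, x j ^ 2 + (∑ j, (y j - 1) + m) ^ 2 = E[(m - 2 * N) ^ 2]`, which is at least the minimum of
`(m - 2 * k) ^ 2` over the integers `0 ≤ k ≤ d`.

For almost commuting unitaries, condition on one coin at a time: the average over its outcomes
becomes the unital completely positive map with Kraus operators `(1 ± U j) / 2`, and the lower bound
survives up to a multiple of the commutators. Up to such an error the left-hand side is the square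
of the Wilson-Dirac operator, which is therefore invertible unless `m` is one of `0, 2, …, 2 * d`.

The index is locally constant on invertible self-adjoint operators, hence constant along paths. A
commuting tuple `U` is joined to the tuple of identities by the commuting tuples `U ^ t`; at the
identities the operator is `m γ`, which anticommutes with `c_1`, so the index vanishes. -/

open Finset
open scoped InnerProductSpace ComplexStarModule ComplexOrder

attribute [local instance] LieRing.ofAssociativeRing

section Index

variable {H : Type*} [NormedAddCommGroup H] [InnerProductSpace ℂ H]

lemma negSpace_eq_posSpace_neg (A : H →L[ℂ] H) : negSpace A = posSpace (-A) := by
  have h (μ : ℝ) : Module.End.eigenspace (-A).toLinearMap ((-μ : ℝ) : ℂ) =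
      Module.End.eigenspace A.toLinearMap (μ : ℂ) := by
    ext v
    simp [neg_eq_iff_eq_neg]
  symm
  rw [negSpace, posSpace, ← (Equiv.neg ℝ).iSup_comp]
  simp only [Equiv.neg_apply, h, Left.neg_pos_iff]

lemma posSpace_eq_negSpace_neg (A : H →L[ℂ] H) : posSpace A = negSpace (-A) := by
  rw [negSpace_eq_posSpace_neg, neg_neg]

lemma exists_pos_mul_norm_le_norm_apply {𝕜 E : Type*} [NontriviallyNormedField 𝕜]
    [NormedAddCommGroup E] [NormedSpace 𝕜 E] {A : E →L[𝕜] E} (hA : IsUnit A) :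
    ∃ g > 0, ∀ v, g * ‖v‖ ≤ ‖A v‖ := by
  obtain ⟨⟨A, B, -, hBA⟩, rfl⟩ := hA
  refine ⟨(‖B‖ + 1)⁻¹, by positivity, fun v => ?_⟩
  rw [inv_mul_le_iff₀ (by positivity)]
  calc ‖v‖ = ‖B (A v)‖ := (congrArg norm (DFunLike.congr_fun hBA v)).symm
    _ ≤ ‖B‖ * ‖A v‖ := B.le_opNorm _
    _ ≤ (‖B‖ + 1) * ‖A v‖ := by gcongr; linarith

variable {A B : H →L[ℂ] H}

lemma map_posSpace_le_negSpace {W : H →L[ℂ] H} (h : W * A = -(A * W)) :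
    (posSpace A).map W.toLinearMap ≤ negSpace A := by
  simp only [posSpace, Submodule.map_iSup]
  refine iSup₂_le fun μ hμ => ?_
  rintro _ ⟨v, hv, rfl⟩
  refine Submodule.mem_iSup_of_mem (-μ) (Submodule.mem_iSup_of_mem (neg_lt_zero.mpr hμ) ?_)
  have hAv : A v = (μ : ℂ) • v := Module.End.mem_eigenspace_iff.mp hv
  have hWAv : W (A v) = -(A (W v)) := congrArg (· v) h
  rw [hAv, map_smul] at hWAv
  simp [hWAv]

variable [FiniteDimensional ℂ H]

lemma Ind_eq_zero_of_anticommute {W : H →L[ℂ] H} (hW : Function.Injective W)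
    (h : W * A = -(A * W)) : Ind A = 0 := by
  have hpos : Module.finrank ℂ (posSpace A) ≤ Module.finrank ℂ (negSpace A) := by
    rw [(Submodule.equivMapOfInjective W.toLinearMap hW _).finrank_eq]
    exact Submodule.finrank_mono (map_posSpace_le_negSpace h)
  have hneg : Module.finrank ℂ (negSpace A) ≤ Module.finrank ℂ (posSpace A) := by
    rw [(Submodule.equivMapOfInjective W.toLinearMap hW _).finrank_eq, posSpace_eq_negSpace_neg,
      negSpace_eq_posSpace_neg]
    exact Submodule.finrank_mono (map_posSpace_le_negSpace (by rw [mul_neg, h, neg_mul]))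
  rw [Ind, le_antisymm hpos hneg, sub_self, zero_div]

lemma posSpace_isOrtho_eigenspace (hA : IsSelfAdjoint A) {ν : ℝ} (hν : ν ≤ 0) :
    posSpace A ⟂ Module.End.eigenspace A.toLinearMap (ν : ℂ) := by
  rw [posSpace, Submodule.isOrtho_iSup_left]
  intro μ
  rw [Submodule.isOrtho_iSup_left]
  intro hμ
  exact hA.isSymmetric.orthogonalFamily_eigenspaces.isOrtho
    (Complex.ofReal_injective.ne (hν.trans_lt hμ).ne')

lemma re_inner_apply_self_eq_sum (hA : A.toLinearMap.IsSymmetric) (v : H) :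
    (⟪v, A v⟫_ℂ).re =
      ∑ i, hA.eigenvalues rfl i * ‖⟪hA.eigenvectorBasis rfl i, v⟫_ℂ‖ ^ 2 := by
  rw [← (hA.eigenvectorBasis rfl).sum_inner_mul_inner v (A v), Complex.re_sum]
  refine Finset.sum_congr rfl fun i _ => ?_
  have hinner : ⟪hA.eigenvectorBasis rfl i, A v⟫_ℂ =
      hA.eigenvalues rfl i * ⟪hA.eigenvectorBasis rfl i, v⟫_ℂ := by
    refine (hA _ v).symm.trans ?_
    rw [hA.apply_eigenvectorBasis rfl i, inner_smul_left]
    exact congrArg (· * _) (Complex.conj_ofReal _)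
  rw [hinner, mul_left_comm, Complex.re_ofReal_mul]
  congr 1
  refine (inner_mul_symm_re_eq_norm (𝕜 := ℂ) v _).trans ?_
  rw [norm_mul, norm_inner_symm, sq]

lemma mul_norm_sq_le_re_inner_of_mem_posSpace (hA : IsSelfAdjoint A) {g : ℝ}
    (hg : ∀ v, g * ‖v‖ ≤ ‖A v‖) {v : H} (hv : v ∈ posSpace A) :
    g * ‖v‖ ^ 2 ≤ (⟪v, A v⟫_ℂ).re := by
  have hS : A.toLinearMap.IsSymmetric := hA.isSymmetric
  have hAe (i) : A (hS.eigenvectorBasis rfl i) =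
      (hS.eigenvalues rfl i : ℂ) • hS.eigenvectorBasis rfl i := hS.apply_eigenvectorBasis rfl i
  rw [re_inner_apply_self_eq_sum hS, ← (hS.eigenvectorBasis rfl).sum_sq_norm_inner_right v,
    Finset.mul_sum]
  refine Finset.sum_le_sum fun i _ => ?_
  rcases le_or_gt (hS.eigenvalues rfl i) 0 with hi | hi
  · have hzero : ⟪hS.eigenvectorBasis rfl i, v⟫_ℂ = 0 :=
      (posSpace_isOrtho_eigenspace hA hi).symm.inner_eq
        (Module.End.mem_eigenspace_iff.mpr (hAe i)) hv
    simp [hzero]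
  · have hgap := hg (hS.eigenvectorBasis rfl i)
    rw [hAe, norm_smul, (hS.eigenvectorBasis rfl).norm_eq_one, mul_one, mul_one, Complex.norm_real,
      Real.norm_of_nonneg hi.le] at hgap
    gcongr

lemma re_inner_nonpos_of_mem_negSpace (hA : IsSelfAdjoint A) {v : H} (hv : v ∈ negSpace A) :
    (⟪v, A v⟫_ℂ).re ≤ 0 := by
  rw [negSpace_eq_posSpace_neg] at hv
  have := mul_norm_sq_le_re_inner_of_mem_posSpace hA.neg (g := 0) (by simp) hv
  simpa using this

lemma disjoint_posSpace_negSpace (hA : IsSelfAdjoint A) (hB : IsSelfAdjoint B) {g : ℝ}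
    (hg : ∀ v, g * ‖v‖ ≤ ‖A v‖) (hAB : ‖A - B‖ < g) : Disjoint (posSpace A) (negSpace B) := by
  rw [Submodule.disjoint_def]
  intro v hvA hvB
  have hpos := mul_norm_sq_le_re_inner_of_mem_posSpace hA hg hvA
  have hneg := re_inner_nonpos_of_mem_negSpace hB hvB
  have hdiff : (⟪v, (A - B) v⟫_ℂ).re ≤ ‖A - B‖ * ‖v‖ ^ 2 := by
    refine (Complex.re_le_norm _).trans ((norm_inner_le_norm _ _).trans ?_)
    nlinarith [(A - B).le_opNorm v, norm_nonneg v]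
  rw [sub_apply, inner_sub_right, Complex.sub_re] at hdiff
  by_contra hv
  nlinarith [pow_pos (norm_pos_iff.mpr hv) 2]

lemma codisjoint_posSpace_negSpace (hA : IsSelfAdjoint A) (hinj : Function.Injective A) :
    Codisjoint (posSpace A) (negSpace A) := by
  have hS : A.toLinearMap.IsSymmetric := hA.isSymmetric
  rw [codisjoint_iff, eq_top_iff, ← (hS.eigenvectorBasis rfl).toBasis.span_eq, Submodule.span_le]
  rintro _ ⟨i, rfl⟩
  rw [OrthonormalBasis.coe_toBasis]
  have hmem : hS.eigenvectorBasis rfl i ∈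
      Module.End.eigenspace A.toLinearMap (hS.eigenvalues rfl i : ℂ) :=
    Module.End.mem_eigenspace_iff.mpr (hS.apply_eigenvectorBasis rfl i)
  rcases lt_trichotomy (hS.eigenvalues rfl i) 0 with hi | hi | hi
  · exact Submodule.mem_sup_right <|
      Submodule.mem_iSup_of_mem _ (Submodule.mem_iSup_of_mem hi hmem)
  · rw [hi, Complex.ofReal_zero, Module.End.eigenspace_zero, LinearMap.mem_ker] at hmem
    exact absurd (hinj (hmem.trans (map_zero A).symm))
      ((hS.eigenvectorBasis rfl).orthonormal.ne_zero i)
  · exact Submodule.mem_sup_left <|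
      Submodule.mem_iSup_of_mem _ (Submodule.mem_iSup_of_mem hi hmem)

lemma finrank_posSpace_add_finrank_negSpace (hA : IsSelfAdjoint A) (hunit : IsUnit A) :
    Module.finrank ℂ (posSpace A) + Module.finrank ℂ (negSpace A) = Module.finrank ℂ H := by
  obtain ⟨g, hg₀, hg⟩ := exists_pos_mul_norm_le_norm_apply hunit
  have hinj : Function.Injective A := (ContinuousLinearMap.isUnit_iff_bijective.mp hunit).1
  exact Submodule.finrank_add_eq_of_isCompl
    ⟨disjoint_posSpace_negSpace hA hA hg (by simpa using hg₀),
      codisjoint_posSpace_negSpace hA hinj⟩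

lemma Ind_eq_of_norm_sub_lt (hA : IsSelfAdjoint A) (hB : IsSelfAdjoint B) (hA' : IsUnit A)
    (hB' : IsUnit B) {g : ℝ} (hg : ∀ v, g * ‖v‖ ≤ ‖A v‖) (hAB : ‖A - B‖ < g) : Ind A = Ind B := by
  have hAB_disjoint := disjoint_posSpace_negSpace hA hB hg hAB
  have hBA_disjoint : Disjoint (negSpace A) (posSpace B) := by
    rw [negSpace_eq_posSpace_neg, posSpace_eq_negSpace_neg B]
    refine disjoint_posSpace_negSpace hA.neg hB.neg (by simpa using hg) ?_
    rwa [neg_sub_neg, norm_sub_rev]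
  have := Submodule.finrank_add_finrank_le_of_disjoint hAB_disjoint
  have := Submodule.finrank_add_finrank_le_of_disjoint hBA_disjoint
  have := finrank_posSpace_add_finrank_negSpace hA hA'
  have := finrank_posSpace_add_finrank_negSpace hB hB'
  rw [Ind, Ind, show Module.finrank ℂ (posSpace A) = Module.finrank ℂ (posSpace B) by lia,
    show Module.finrank ℂ (negSpace A) = Module.finrank ℂ (negSpace B) by lia]

lemma Ind_eq_of_continuousOn {X : Type*} [TopologicalSpace X] {S : Set X} (hS : IsPreconnected S)
    {D : X → H →L[ℂ] H} (hD : ContinuousOn D S) (hsa : ∀ x ∈ S, IsSelfAdjoint (D x))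
    (hunit : ∀ x ∈ S, IsUnit (D x)) {x y : X} (hx : x ∈ S) (hy : y ∈ S) :
    Ind (D x) = Ind (D y) := by
  refine hS.induction₂ (fun x y => Ind (D x) = Ind (D y)) (fun x hx => ?_)
    (fun _ _ _ _ _ _ => Eq.trans) (fun _ _ _ _ => Eq.symm) hx hy
  obtain ⟨g, hg₀, hg⟩ := exists_pos_mul_norm_le_norm_apply (hunit x hx)
  filter_upwards [hD x hx (Metric.ball_mem_nhds (D x) hg₀), self_mem_nhdsWithin] with y hy hyS
  refine Ind_eq_of_norm_sub_lt (hsa x hx) (hsa y hyS) (hunit x hx) (hunit y hyS) hg ?_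
  rwa [← dist_eq_norm, dist_comm]

end Index

section Commutator

lemma neg_mem_unitary {R : Type*} [Ring R] [StarRing R] {u : R} (hu : u ∈ unitary R) :
    -u ∈ unitary R :=
  (-(⟨u, hu⟩ : unitary R)).2

variable {A : Type*} [NormedRing A]

lemma norm_lie_sq_le (a b : A) : ‖⁅a, b ^ 2⁆‖ ≤ 2 * ‖b‖ * ‖⁅a, b⁆‖ := by
  have h : ⁅a, b ^ 2⁆ = b * ⁅a, b⁆ + ⁅a, b⁆ * b := by
    simp only [Ring.lie_def]
    noncomm_ring
  rw [h]
  linarith [norm_add_le (b * ⁅a, b⁆) (⁅a, b⁆ * b), norm_mul_le b ⁅a, b⁆, norm_mul_le ⁅a, b⁆ b]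

lemma norm_sum_sq_sub_sum_sq_le {ι : Type*} (s : Finset ι) (a : ι → A) {ε : ℝ}
    (h : ∀ j ∈ s, ∀ l ∈ s, j ≠ l → ‖a j * a l + a l * a j‖ ≤ ε) :
    ‖(∑ j ∈ s, a j) ^ 2 - ∑ j ∈ s, a j ^ 2‖ ≤ (#s).choose 2 * ε := by
  classical
  induction s using Finset.induction_on with
  | empty => simp
  | insert i s hi ih =>
    have hcross : ‖∑ j ∈ s, (a i * a j + a j * a i)‖ ≤ #s * ε := by
      rw [← nsmul_eq_mul]
      exact (norm_sum_le_of_le s fun j hj => h i (mem_insert_self i s) j (mem_insert_of_mem hj)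
        (by rintro rfl; exact hi hj)).trans_eq (sum_const ε)
    have hrec : (∑ j ∈ insert i s, a j) ^ 2 - ∑ j ∈ insert i s, a j ^ 2 =
        ((∑ j ∈ s, a j) ^ 2 - ∑ j ∈ s, a j ^ 2) +
          ∑ j ∈ s, (a i * a j + a j * a i) := by
      simp only [sum_insert hi, sum_add_distrib, ← mul_sum, ← sum_mul]
      noncomm_ring
    rw [hrec, card_insert_of_notMem hi, Nat.choose_succ_succ, Nat.choose_one_right]
    push_cast
    have := ih fun j hj l hl => h j (mem_insert_of_mem hj) l (mem_insert_of_mem hl)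
    linarith [norm_add_le ((∑ j ∈ s, a j) ^ 2 - ∑ j ∈ s, a j ^ 2)
      (∑ j ∈ s, (a i * a j + a j * a i))]

variable [StarRing A] [CStarRing A]

lemma norm_le_one_of_mem_unitary {u : A} (hu : u ∈ unitary A) : ‖u‖ ≤ 1 := by
  nontriviality A
  exact (CStarRing.norm_of_mem_unitary hu).le

lemma norm_star_lie_of_mem_unitary {u : A} (hu : u ∈ unitary A) (a : A) :
    ‖⁅star u, a⁆‖ = ‖⁅u, a⁆‖ := by
  have h : star u * ⁅u, a⁆ * star u = -⁅star u, a⁆ := by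
    simp only [Ring.lie_def, mul_sub, sub_mul, neg_sub, mul_assoc, Unitary.mul_star_self_of_mem hu,
      mul_one]
    simp only [← mul_assoc, Unitary.star_mul_self_of_mem hu, one_mul]
  rw [← norm_neg, ← h, CStarRing.norm_mul_mem_unitary _ (Unitary.star_mem hu),
    CStarRing.norm_mem_unitary_mul _ (Unitary.star_mem hu)]

end Commutator

section Parts

variable {A : Type*} [CStarAlgebra A] {u : A}

lemma norm_realPart_lie_le (hu : u ∈ unitary A) (a : A) : ‖⁅(ℜ u : A), a⁆‖ ≤ ‖⁅u, a⁆‖ := by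
  rw [realPart_apply_coe, smul_lie, add_lie, norm_smul, Real.norm_of_nonneg (by norm_num)]
  linarith [norm_add_le ⁅u, a⁆ ⁅star u, a⁆, norm_star_lie_of_mem_unitary hu a]

lemma norm_imaginaryPart_lie_le (hu : u ∈ unitary A) (a : A) :
    ‖⁅(ℑ u : A), a⁆‖ ≤ ‖⁅u, a⁆‖ := by
  rw [imaginaryPart_apply_coe, smul_lie, smul_lie, sub_lie, norm_smul, norm_smul, norm_neg,
    Complex.norm_I, Real.norm_of_nonneg (by norm_num)]
  linarith [norm_sub_le ⁅u, a⁆ ⁅star u, a⁆, norm_star_lie_of_mem_unitary hu a]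

lemma commute_imaginaryPart_left_of_mem_unitary {a : A} (hu : u ∈ unitary A) (h : Commute u a) :
    Commute (ℑ u : A) a :=
  commute_iff_lie_eq.mpr <| norm_le_zero_iff.mp <|
    (norm_imaginaryPart_lie_le hu a).trans_eq (by rw [h.lie_eq, norm_zero])

/-- The Kraus operators of the quantum analogue of a coin flip with bias `ℜ u` are `krausOp u` and
`krausOp (-u)`: for unitary `u`, their absolute squares `(1 ± ℜ u) / 2` add up to `1`. -/
noncomputable def krausOp (u : A) : A := (2⁻¹ : ℝ) • (1 + u)

lemma norm_krausOp_le_one (hu : u ∈ unitary A) : ‖krausOp u‖ ≤ 1 := by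
  rw [krausOp, norm_smul, Real.norm_of_nonneg (by norm_num)]
  linarith [norm_add_le 1 u, norm_le_one_of_mem_unitary hu,
    norm_le_one_of_mem_unitary (one_mem (unitary A))]

lemma star_krausOp_mul_self (hu : u ∈ unitary A) :
    star (krausOp u) * krausOp u = (2⁻¹ : ℝ) • (1 + (ℜ u : A)) := by
  rw [krausOp, realPart_apply_coe, star_smul, star_trivial, smul_mul_smul_comm, star_add, star_one,
    add_mul, mul_add, mul_add, Unitary.star_mul_self_of_mem hu]
  simp only [one_mul, mul_one]
  module

lemma star_krausOp_mul_self_add_star_krausOp_neg_mul_self (hu : u ∈ unitary A) :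
    star (krausOp u) * krausOp u + star (krausOp (-u)) * krausOp (-u) = 1 := by
  rw [star_krausOp_mul_self hu, star_krausOp_mul_self (neg_mem_unitary hu), map_neg,
    NegMemClass.coe_neg]
  module

lemma norm_krausOp_lie_le (u a : A) : ‖⁅krausOp u, a⁆‖ ≤ ‖⁅u, a⁆‖ / 2 := by
  have hlie : ⁅krausOp u, a⁆ = (2⁻¹ : ℝ) • ⁅u, a⁆ := by
    rw [krausOp, smul_lie, add_lie, (Commute.one_left a).lie_eq, zero_add]
  rw [hlie, norm_smul, Real.norm_of_nonneg (by norm_num), inv_mul_eq_div]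

lemma norm_star_krausOp_mul_lie_le (hu : u ∈ unitary A) (a : A) :
    ‖star (krausOp u) * ⁅krausOp u, a⁆‖ ≤ ‖⁅u, a⁆‖ / 2 := by
  refine (norm_mul_le _ _).trans ?_
  rw [norm_star]
  exact (mul_le_of_le_one_left (norm_nonneg _) (norm_krausOp_le_one hu)).trans
    (norm_krausOp_lie_le u a)

lemma norm_realPart_le_one (hu : u ∈ unitary A) : ‖(ℜ u : A)‖ ≤ 1 :=
  (realPart.norm_le u).trans (norm_le_one_of_mem_unitary hu)

lemma norm_imaginaryPart_le_one (hu : u ∈ unitary A) : ‖(ℑ u : A)‖ ≤ 1 :=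
  (imaginaryPart.norm_le u).trans (norm_le_one_of_mem_unitary hu)

end Parts

section Symbol

variable {A : Type*} [CStarAlgebra A] {ι : Type*}

/-- The momentum-dependent mass `∑ j ∈ s, (y j - 1) + m`, with `y j` the real part of `u j`. The
index set is a parameter so that the coordinates can be added one at a time. -/
noncomputable def massTerm (u : ι → A) (s : Finset ι) (m : ℝ) : A :=
  ∑ j ∈ s, ((ℜ (u j) : A) - 1) + algebraMap ℝ A m

/-- The noncommutative version of `fmSq`: the value of `wilsonDirac cs u 1 m ^ 2` when
`s` is everything and the `u j` commute. -/
noncomputable def symbolSq (u : ι → A) (s : Finset ι) (m : ℝ) : A :=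
  ∑ j ∈ s, (ℑ (u j) : A) ^ 2 + massTerm u s m ^ 2

variable {u : ι → A} {s : Finset ι} {m : ℝ}

lemma isSelfAdjoint_massTerm : IsSelfAdjoint (massTerm u s m) :=
  (isSelfAdjoint_sum s fun j _ => (ℜ (u j)).2.sub (.one A)).add (.algebraMap A (.all m))

lemma isSelfAdjoint_symbolSq : IsSelfAdjoint (symbolSq u s m) :=
  (isSelfAdjoint_sum s fun j _ => IsSelfAdjoint.pow (ℑ (u j)).2 2).add
    (isSelfAdjoint_massTerm.pow 2)

lemma massTerm_sub_two : massTerm u s (m - 2) = massTerm u s m - 2 := by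
  rw [massTerm, massTerm, map_sub, map_ofNat, add_sub_assoc]

/-- First-step analysis: with probability `(1 + ℜ (u a)) / 2` the coin `a` fails and `m` is kept,
otherwise `m` drops by `2`. -/
lemma symbolSq_insert [DecidableEq ι] {a : ι} (ha : a ∉ s) (hu : u a ∈ unitary A) :
    symbolSq u (insert a s) m =
      star (krausOp (u a)) * krausOp (u a) * symbolSq u s m +
        star (krausOp (-u a)) * krausOp (-u a) * symbolSq u s (m - 2) +
        ⁅massTerm u s m, (ℜ (u a) : A)⁆ := by
  have hmass : massTerm u (insert a s) m = massTerm u s m + ((ℜ (u a) : A) - 1) := by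
    rw [massTerm, massTerm, sum_insert ha]
    abel
  have hsq : (ℑ (u a) : A) ^ 2 = 1 - (ℜ (u a) : A) ^ 2 :=
    eq_sub_of_add_eq'
      (mem_unitary_iff_isStarNormal_and_realPart_sq_add_imaginaryPart_sq_eq_one.mp hu).2
  rw [star_krausOp_mul_self hu, star_krausOp_mul_self (neg_mem_unitary hu), map_neg,
    NegMemClass.coe_neg, symbolSq, symbolSq, symbolSq, sum_insert ha, hsq, hmass, massTerm_sub_two,
    Ring.lie_def]
  generalize ∑ j ∈ s, (ℑ (u j) : A) ^ 2 = X
  generalize massTerm u s m = M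
  generalize (ℜ (u a) : A) = y
  simp only [sq, mul_add, add_mul, mul_sub, sub_mul, smul_mul_assoc, neg_mul, one_mul, mul_one,
    mul_two, two_mul]
  module

variable {ε K : ℝ}

lemma norm_massTerm_le (hu : ∀ j ∈ s, u j ∈ unitary A) : ‖massTerm u s m‖ ≤ |m| + 2 * #s := by
  have hone : ‖(1 : A)‖ ≤ 1 := norm_le_one_of_mem_unitary (one_mem (unitary A))
  have hterm : ∀ j ∈ s, ‖(ℜ (u j) : A) - 1‖ ≤ 2 := fun j hj => by
    linarith [norm_sub_le (ℜ (u j) : A) 1, norm_realPart_le_one (hu j hj)]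
  have hsum := (norm_sum_le_of_le s hterm).trans_eq (sum_const 2)
  rw [nsmul_eq_mul] at hsum
  have hm : ‖algebraMap ℝ A m‖ ≤ |m| :=
    (norm_algebraMap A m).trans_le (mul_le_of_le_one_right (norm_nonneg m) hone)
  rw [massTerm]
  linarith [norm_add_le (∑ j ∈ s, ((ℜ (u j) : A) - 1)) (algebraMap ℝ A m)]

lemma norm_massTerm_lie_le (hu : ∀ j ∈ s, u j ∈ unitary A) {a : A}
    (h : ∀ j ∈ s, ‖⁅u j, a⁆‖ ≤ ε) : ‖⁅massTerm u s m, a⁆‖ ≤ #s * ε := by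
  have hlie : ⁅massTerm u s m, a⁆ = ∑ j ∈ s, ⁅(ℜ (u j) : A), a⁆ := by
    have hone : ⁅(1 : A), a⁆ = 0 := (Commute.one_left a).lie_eq
    have hm : ⁅algebraMap ℝ A m, a⁆ = 0 := (Algebra.commute_algebraMap_left m a).lie_eq
    simp only [massTerm, add_lie, sum_lie, sub_lie, hone, hm, sub_zero, add_zero]
  rw [hlie, ← nsmul_eq_mul, ← sum_const]
  exact norm_sum_le_of_le s fun j hj => (norm_realPart_lie_le (hu j hj) a).trans (h j hj)

lemma commute_massTerm (hu : ∀ j ∈ s, u j ∈ unitary A) {a : A} (h : ∀ j ∈ s, Commute (u j) a) :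
    Commute (massTerm u s m) a :=
  commute_iff_lie_eq.mpr <| norm_le_zero_iff.mp <|
    (norm_massTerm_lie_le hu fun j hj => (norm_eq_zero.mpr (h j hj).lie_eq).le).trans_eq
      (mul_zero _)

lemma norm_lie_symbolSq_le (hu : ∀ j ∈ s, u j ∈ unitary A) (hK : |m| + 2 * #s ≤ K) {a : A}
    (h : ∀ j ∈ s, ‖⁅u j, a⁆‖ ≤ ε) : ‖⁅a, symbolSq u s m⁆‖ ≤ 2 * #s * (1 + K) * ε := by
  have himag : ∀ j ∈ s, ‖⁅a, (ℑ (u j) : A) ^ 2⁆‖ ≤ 2 * ε := fun j hj => by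
    have hlie : ‖⁅a, (ℑ (u j) : A)⁆‖ ≤ ε := by
      rw [← lie_skew, norm_neg]
      exact (norm_imaginaryPart_lie_le (hu j hj) a).trans (h j hj)
    nlinarith [norm_lie_sq_le a (ℑ (u j) : A), norm_imaginaryPart_le_one (hu j hj),
      norm_nonneg ⁅a, (ℑ (u j) : A)⁆]
  have hmass : ‖⁅a, massTerm u s m ^ 2⁆‖ ≤ 2 * K * (#s * ε) := by
    refine (norm_lie_sq_le a _).trans ?_
    rw [← lie_skew, norm_neg]
    gcongr
    · linarith [norm_nonneg (massTerm u s m), norm_massTerm_le (m := m) hu]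
    · exact (norm_massTerm_le hu).trans hK
    · exact norm_massTerm_lie_le hu h
  have hsum := norm_sum_le_of_le s himag
  rw [sum_const, nsmul_eq_mul] at hsum
  rw [symbolSq, lie_add, lie_sum]
  linarith [norm_add_le (∑ j ∈ s, ⁅a, (ℑ (u j) : A) ^ 2⁆) ⁅a, massTerm u s m ^ 2⁆]

lemma norm_symbolSq_insert_sub_le [DecidableEq ι] {a : ι} (ha : a ∉ s)
    (hu : ∀ j ∈ insert a s, u j ∈ unitary A) (hK : |m| + 2 * (#s + 1) ≤ K)
    (hε : ∀ j ∈ s, ‖⁅u j, u a⁆‖ ≤ ε) :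
    ‖symbolSq u (insert a s) m - (star (krausOp (u a)) * symbolSq u s m * krausOp (u a) +
        star (krausOp (-u a)) * symbolSq u s (m - 2) * krausOp (-u a))‖ ≤
      #s * (3 + 2 * K) * ε := by
  obtain ⟨hua, hus⟩ := forall_mem_insert .. |>.mp hu
  have hK₂ : |m - 2| + 2 * #s ≤ K := by linarith [abs_sub m 2, abs_two (α := ℝ)]
  have herr : symbolSq u (insert a s) m -
      (star (krausOp (u a)) * symbolSq u s m * krausOp (u a) +
        star (krausOp (-u a)) * symbolSq u s (m - 2) * krausOp (-u a)) =
      star (krausOp (u a)) * ⁅krausOp (u a), symbolSq u s m⁆ +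
        star (krausOp (-u a)) * ⁅krausOp (-u a), symbolSq u s (m - 2)⁆ +
        ⁅massTerm u s m, (ℜ (u a) : A)⁆ := by
    rw [symbolSq_insert ha hua]
    simp only [Ring.lie_def]
    noncomm_ring
  have hp := norm_star_krausOp_mul_lie_le hua (symbolSq u s m)
  have hr := norm_star_krausOp_mul_lie_le (neg_mem_unitary hua) (symbolSq u s (m - 2))
  have hQ := norm_lie_symbolSq_le hus (m := m) (K := K) (by linarith) hε
  have hQ' := norm_lie_symbolSq_le hus hK₂ hε
  have hM : ‖⁅massTerm u s m, (ℜ (u a) : A)⁆‖ ≤ #s * ε := by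
    refine norm_massTerm_lie_le hus fun j hj => ?_
    rw [← lie_skew, norm_neg]
    refine (norm_realPart_lie_le hua _).trans ?_
    rw [← lie_skew, norm_neg]
    exact hε j hj
  rw [neg_lie, norm_neg] at hr
  rw [herr]
  refine norm_add₃_le.trans ?_
  linarith

variable [PartialOrder A] [StarOrderedRing A]

lemma algebraMap_sub_le_add_of_norm_le {a e : A} {c δ : ℝ} (ha : algebraMap ℝ A c ≤ a)
    (he : IsSelfAdjoint e) (hδ : ‖e‖ ≤ δ) : algebraMap ℝ A (c - δ) ≤ a + e := by
  rw [map_sub, sub_eq_add_neg]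
  refine add_le_add ha (le_trans ?_ he.neg_algebraMap_norm_le_self)
  exact neg_le_neg (algebraMap_mono A hδ)

lemma isUnit_of_algebraMap_le_sq {a : A} {c : ℝ} (hc : 0 < c) (h : algebraMap ℝ A c ≤ a ^ 2) :
    IsUnit a :=
  (isUnit_pow_iff two_ne_zero).mp <|
    CStarAlgebra.isUnit_of_le _ h (isStrictlyPositive_algebraMap hc)

lemma algebraMap_le_conjugate_add_conjugate {p r a b : A} {c : ℝ}
    (hpr : star p * p + star r * r = 1) (ha : algebraMap ℝ A c ≤ a) (hb : algebraMap ℝ A c ≤ b) :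
    algebraMap ℝ A c ≤ star p * a * p + star r * b * r := by
  have hconj (q : A) : star q * algebraMap ℝ A c * q = c • (star q * q) := by
    rw [Algebra.algebraMap_eq_smul_one, mul_smul_comm, mul_one, smul_mul_assoc]
  calc algebraMap ℝ A c = star p * algebraMap ℝ A c * p + star r * algebraMap ℝ A c * r := by
        rw [hconj, hconj, ← smul_add, hpr, Algebra.algebraMap_eq_smul_one]
    _ ≤ star p * a * p + star r * b * r :=
        add_le_add (star_left_conjugate_le_conjugate ha p) (star_left_conjugate_le_conjugate hb r)

lemma algebraMap_le_symbolSq {g : ℝ} (hu : ∀ j ∈ s, u j ∈ unitary A)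
    (hg : ∀ k ≤ #s, g ≤ (m - 2 * k) ^ 2) (hK : |m| + 2 * #s ≤ K)
    (hε : ∀ j ∈ s, ∀ l ∈ s, ‖⁅u j, u l⁆‖ ≤ ε) :
    algebraMap ℝ A (g - (K + 2) * #s ^ 2 * ε) ≤ symbolSq u s m := by
  classical
  induction s using Finset.induction_on generalizing m with
  | empty =>
    simp only [symbolSq, massTerm, sum_empty, card_empty, zero_add, ← map_pow]
    exact algebraMap_mono A (by simpa using hg 0)
  | insert a s ha ih =>
    rw [card_insert_of_notMem ha] at hg hK ⊢
    rw [Nat.cast_succ] at hK ⊢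
    obtain ⟨hua, hus⟩ := forall_mem_insert .. |>.mp hu
    have hεs : ∀ j ∈ s, ∀ l ∈ s, ‖⁅u j, u l⁆‖ ≤ ε := fun j hj l hl =>
      hε j (mem_insert_of_mem hj) l (mem_insert_of_mem hl)
    have hQ := ih hus (fun k hk => hg k (hk.trans s.card.le_succ)) (by linarith) hεs
    have hQ' := ih (m := m - 2) hus
      (fun k hk => (hg (k + 1) (by lia)).trans_eq (by push_cast; ring))
      (by linarith [abs_sub m 2, abs_two (α := ℝ)]) hεs
    have hconj := algebraMap_le_conjugate_add_conjugate
      (star_krausOp_mul_self_add_star_krausOp_neg_mul_self hua) hQ hQ'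
    have herr := norm_symbolSq_insert_sub_le (m := m) ha hu hK
      fun j hj => hε j (mem_insert_of_mem hj) a (mem_insert_self a s)
    have hsa : IsSelfAdjoint (symbolSq u (insert a s) m -
        (star (krausOp (u a)) * symbolSq u s m * krausOp (u a) +
          star (krausOp (-u a)) * symbolSq u s (m - 2) * krausOp (-u a))) :=
      isSelfAdjoint_symbolSq.sub ((isSelfAdjoint_symbolSq.conjugate' _).add
        (isSelfAdjoint_symbolSq.conjugate' _))
    have hε₀ : 0 ≤ ε := (norm_nonneg _).trans (hε a (mem_insert_self a s) a (mem_insert_self a s))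
    refine le_trans (algebraMap_mono A ?_)
      ((algebraMap_sub_le_add_of_norm_le hconj hsa herr).trans_eq (add_sub_cancel _ _))
    nlinarith [abs_nonneg m]

end Symbol

section WilsonDirac

variable {H : Type*} [NormedAddCommGroup H] [InnerProductSpace ℂ H] [CompleteSpace H] {d : ℕ}

namespace CliffordSystem

variable (cs : CliffordSystem H d)

lemma c_mul_self (j : Fin d) : cs.c j * cs.c j = -1 := by
  have h := cs.c_rel j j
  rw [if_pos rfl, ← two_smul ℂ, neg_smul, ← smul_neg] at h
  exact smul_right_injective _ (two_ne_zero (α := ℂ)) h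

lemma c_mul_c_of_ne {j l : Fin d} (hjl : j ≠ l) : cs.c l * cs.c j = -(cs.c j * cs.c l) := by
  have h := cs.c_rel l j
  rw [if_neg hjl.symm] at h
  exact eq_neg_of_add_eq_zero_left h

lemma c_mem_unitary (j : Fin d) : cs.c j ∈ unitary (H →L[ℂ] H) := by
  rw [Unitary.mem_iff, cs.c_skew, neg_mul, mul_neg, c_mul_self, neg_neg]
  exact ⟨rfl, rfl⟩

lemma γ_mem_unitary : cs.γ ∈ unitary (H →L[ℂ] H) := by
  rw [Unitary.mem_iff, cs.γ_sa, cs.γ_sq]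
  exact ⟨rfl, rfl⟩

/-- The tuples `U` from which `wilsonDirac cs U` is built: unitaries in the commutant of the
Clifford system. -/
structure IsCommutantUnitary (U : Fin d → H →L[ℂ] H) : Prop where
  mem_unitary : ∀ j, U j ∈ unitary (H →L[ℂ] H)
  commute_c : ∀ j l, Commute (U j) (cs.c l)
  commute_γ : ∀ j, Commute (U j) cs.γ

end CliffordSystem

/-- The summand `i x_j c_j` of the Wilson-Dirac operator. -/
noncomputable def kineticTerm (cs : CliffordSystem H d) (U : Fin d → H →L[ℂ] H) (j : Fin d) :
    H →L[ℂ] H :=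
  Complex.I • ((ℑ (U j) : H →L[ℂ] H) * cs.c j)

lemma wilsonDirac_one_eq (cs : CliffordSystem H d) (U : Fin d → H →L[ℂ] H) (m : ℝ) :
    wilsonDirac cs U 1 m = ∑ j, kineticTerm cs U j + cs.γ * massTerm U univ m := by
  have hx (j : Fin d) : xPart (U j) = ℑ (U j) := by
    rw [xPart, imaginaryPart_apply_coe, ← Complex.coe_smul, smul_smul]
    congr 1
    simp
  have hy (j : Fin d) : yPart (U j) = ℜ (U j) := by
    rw [yPart, realPart_apply_coe, ← Complex.coe_smul]
    norm_num
  simp only [wilsonDirac, kineticTerm, massTerm, hx, hy, Complex.ofReal_one, one_smul,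
    Algebra.algebraMap_eq_smul_one, Complex.coe_smul]

variable {cs : CliffordSystem H d} {U : Fin d → H →L[ℂ] H} {m ε : ℝ}

namespace CliffordSystem.IsCommutantUnitary

variable (hU : cs.IsCommutantUnitary U)
include hU

lemma commute_imaginaryPart_c (j l : Fin d) : Commute (ℑ (U j) : H →L[ℂ] H) (cs.c l) :=
  commute_imaginaryPart_left_of_mem_unitary (hU.mem_unitary j) (hU.commute_c j l)

lemma commute_imaginaryPart_γ (j : Fin d) : Commute (ℑ (U j) : H →L[ℂ] H) cs.γ :=
  commute_imaginaryPart_left_of_mem_unitary (hU.mem_unitary j) (hU.commute_γ j)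

lemma commute_massTerm_c (l : Fin d) : Commute (massTerm U univ m) (cs.c l) :=
  commute_massTerm (fun j _ => hU.mem_unitary j) fun j _ => hU.commute_c j l

lemma commute_massTerm_γ : Commute (massTerm U univ m) cs.γ :=
  commute_massTerm (fun j _ => hU.mem_unitary j) fun j _ => hU.commute_γ j

lemma isSelfAdjoint_kineticTerm (j : Fin d) : IsSelfAdjoint (kineticTerm cs U j) := by
  rw [IsSelfAdjoint, kineticTerm, star_smul, star_mul, cs.c_skew, (ℑ (U j)).2.star_eq, neg_mul,
    ← (hU.commute_imaginaryPart_c j j).eq, smul_neg, ← neg_smul, Complex.star_def, Complex.conj_I,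
    neg_neg]

lemma isSelfAdjoint_wilsonDirac : IsSelfAdjoint (wilsonDirac cs U 1 m) := by
  rw [wilsonDirac_one_eq]
  refine (isSelfAdjoint_sum _ fun j _ => hU.isSelfAdjoint_kineticTerm j).add ?_
  exact (IsSelfAdjoint.commute_iff cs.γ_sa isSelfAdjoint_massTerm).mp hU.commute_massTerm_γ.symm

lemma kineticTerm_sq (j : Fin d) : kineticTerm cs U j ^ 2 = (ℑ (U j) : H →L[ℂ] H) ^ 2 := by
  rw [kineticTerm, smul_pow, (hU.commute_imaginaryPart_c j j).mul_pow, sq (cs.c j), cs.c_mul_self,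
    Complex.I_sq, mul_neg_one, neg_smul_neg, one_smul]

lemma γ_mul_massTerm_sq : (cs.γ * massTerm U univ m) ^ 2 = massTerm U univ m ^ 2 := by
  rw [hU.commute_massTerm_γ.symm.mul_pow, sq cs.γ, cs.γ_sq, one_mul]

lemma kineticTerm_anticommutator {j l : Fin d} (hjl : j ≠ l) :
    kineticTerm cs U j * kineticTerm cs U l + kineticTerm cs U l * kineticTerm cs U j =
      -(⁅(ℑ (U j) : H →L[ℂ] H), (ℑ (U l) : H →L[ℂ] H)⁆ * (cs.c j * cs.c l)) := by
  have hmul (a b : Fin d) : kineticTerm cs U a * kineticTerm cs U b =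
      -((ℑ (U a) : H →L[ℂ] H) * (ℑ (U b) : H →L[ℂ] H) * (cs.c a * cs.c b)) := by
    rw [kineticTerm, kineticTerm, smul_mul_smul_comm, Complex.I_mul_I, neg_one_smul,
      (hU.commute_imaginaryPart_c b a).symm.mul_mul_mul_comm]
  rw [hmul, hmul, cs.c_mul_c_of_ne hjl, Ring.lie_def]
  noncomm_ring

lemma kineticTerm_massTerm_anticommutator (j : Fin d) :
    kineticTerm cs U j * (cs.γ * massTerm U univ m) +
        cs.γ * massTerm U univ m * kineticTerm cs U j =
      Complex.I • (cs.γ * ⁅massTerm U univ m, (ℑ (U j) : H →L[ℂ] H)⁆ * cs.c j) := by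
  have hx : (ℑ (U j) : H →L[ℂ] H) * cs.c j * (cs.γ * massTerm U univ m) =
      -(cs.γ * (ℑ (U j) * massTerm U univ m) * cs.c j) := by
    calc (ℑ (U j) : H →L[ℂ] H) * cs.c j * (cs.γ * massTerm U univ m)
        = ℑ (U j) * (cs.c j * cs.γ) * massTerm U univ m := by noncomm_ring
      _ = -(ℑ (U j) * cs.γ * (cs.c j * massTerm U univ m)) := by
        rw [eq_neg_of_add_eq_zero_right (add_eq_zero_iff_eq_neg.mpr (cs.γ_anticomm j))]
        noncomm_ring
      _ = -(cs.γ * (ℑ (U j) * massTerm U univ m) * cs.c j) := by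
        rw [(hU.commute_imaginaryPart_γ j).eq, (hU.commute_massTerm_c j).symm.eq]
        noncomm_ring
  rw [kineticTerm, smul_mul_assoc, mul_smul_comm, hx, ← smul_add, Ring.lie_def]
  congr 1
  noncomm_ring

variable (hε : ∀ j l, ‖⁅U j, U l⁆‖ ≤ ε)
include hε

lemma norm_kineticTerm_anticommutator_le {j l : Fin d} (hjl : j ≠ l) :
    ‖kineticTerm cs U j * kineticTerm cs U l + kineticTerm cs U l * kineticTerm cs U j‖ ≤ ε := by
  rw [hU.kineticTerm_anticommutator hjl, norm_neg,
    CStarRing.norm_mul_mem_unitary _ (mul_mem (cs.c_mem_unitary j) (cs.c_mem_unitary l))]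
  refine (norm_imaginaryPart_lie_le (hU.mem_unitary j) _).trans ?_
  rw [← lie_skew, norm_neg]
  refine (norm_imaginaryPart_lie_le (hU.mem_unitary l) _).trans (hε l j)

lemma norm_kineticTerm_massTerm_anticommutator_le (j : Fin d) :
    ‖kineticTerm cs U j * (cs.γ * massTerm U univ m) +
      cs.γ * massTerm U univ m * kineticTerm cs U j‖ ≤ d * ε := by
  rw [hU.kineticTerm_massTerm_anticommutator, norm_smul, Complex.norm_I, one_mul,
    CStarRing.norm_mul_mem_unitary _ (cs.c_mem_unitary j),
    CStarRing.norm_mem_unitary_mul _ cs.γ_mem_unitary]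
  refine (norm_massTerm_lie_le (ε := ε) (fun l _ => hU.mem_unitary l) fun l _ => ?_).trans_eq
    (by rw [card_univ, Fintype.card_fin])
  rw [← lie_skew, norm_neg]
  refine (norm_imaginaryPart_lie_le (hU.mem_unitary j) _).trans (hε j l)

lemma norm_wilsonDirac_sq_sub_symbolSq_le :
    ‖wilsonDirac cs U 1 m ^ 2 - symbolSq U univ m‖ ≤ (d.choose 2 + d ^ 2) * ε := by
  have hkin := norm_sum_sq_sub_sum_sq_le univ (kineticTerm cs U)
    fun j _ l _ hjl => hU.norm_kineticTerm_anticommutator_le hε hjl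
  have hcross := norm_sum_le_of_le univ fun j _ =>
    hU.norm_kineticTerm_massTerm_anticommutator_le (m := m) hε j
  have hsq : wilsonDirac cs U 1 m ^ 2 - symbolSq U univ m =
      ((∑ j, kineticTerm cs U j) ^ 2 - ∑ j, kineticTerm cs U j ^ 2) +
        ∑ j, (kineticTerm cs U j * (cs.γ * massTerm U univ m) +
          cs.γ * massTerm U univ m * kineticTerm cs U j) := by
    simp only [wilsonDirac_one_eq, symbolSq, ← hU.γ_mul_massTerm_sq, hU.kineticTerm_sq,
      sum_add_distrib, ← mul_sum, ← sum_mul]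
    noncomm_ring
  rw [card_univ, Fintype.card_fin] at hkin
  rw [sum_const, card_univ, Fintype.card_fin, nsmul_eq_mul] at hcross
  rw [hsq]
  refine (norm_add_le _ _).trans ((add_le_add hkin hcross).trans_eq ?_)
  ring

lemma isUnit_wilsonDirac {g : ℝ} (hg : ∀ k ≤ d, g ≤ (m - 2 * k) ^ 2)
    (hgε : ((|m| + 2 * d + 2) * d ^ 2 + (d.choose 2 + d ^ 2)) * ε < g) :
    IsUnit (wilsonDirac cs U 1 m) := by
  have hsymbol : algebraMap ℝ (H →L[ℂ] H) (g - (|m| + 2 * d + 2) * d ^ 2 * ε) ≤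
      symbolSq U univ m := by
    simpa only [card_univ, Fintype.card_fin] using
      algebraMap_le_symbolSq (s := univ) (m := m) (fun j _ => hU.mem_unitary j)
        (by simpa using hg) le_rfl fun j _ l _ => hε j l
  have hsq := algebraMap_sub_le_add_of_norm_le hsymbol
    ((hU.isSelfAdjoint_wilsonDirac.pow 2).sub isSelfAdjoint_symbolSq)
    (hU.norm_wilsonDirac_sq_sub_symbolSq_le (m := m) hε)
  rw [add_sub_cancel] at hsq
  exact isUnit_of_algebraMap_le_sq (by linarith) hsq

end CliffordSystem.IsCommutantUnitary

lemma exists_pos_forall_isUnit_wilsonDirac (d : ℕ) {m : ℝ} (hm : ∀ k : ℕ, k ≤ d → m ≠ 2 * k) :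
    ∃ ε > (0 : ℝ), ∀ (H : Type*) [NormedAddCommGroup H] [InnerProductSpace ℂ H]
      [CompleteSpace H] (cs : CliffordSystem H d) (U : Fin d → H →L[ℂ] H),
      cs.IsCommutantUnitary U → (∀ j l, ‖⁅U j, U l⁆‖ ≤ ε) → IsUnit (wilsonDirac cs U 1 m) := by
  obtain ⟨k₀, hk₀, hmin⟩ := exists_min_image (range (d + 1)) (fun k : ℕ => (m - 2 * k) ^ 2)
    nonempty_range_add_one
  have hg : 0 < (m - 2 * k₀) ^ 2 :=
    sq_pos_of_ne_zero (sub_ne_zero.mpr (hm k₀ (mem_range_succ_iff.mp hk₀)))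
  set C : ℝ := (|m| + 2 * d + 2) * d ^ 2 + (d.choose 2 + d ^ 2)
  have : 0 ≤ C := by positivity
  refine ⟨(m - 2 * k₀) ^ 2 / (C + 1), by positivity, fun H _ _ _ cs U hU hε => ?_⟩
  refine hU.isUnit_wilsonDirac hε (fun k hk => hmin k (mem_range_succ_iff.mpr hk)) ?_
  rw [mul_div_assoc', div_lt_iff₀ (by positivity)]
  nlinarith

end WilsonDirac

section FractionalPower

variable {A : Type*} [CStarAlgebra A] {u : unitary A}

lemma expUnitary_argSelfAdjoint_of_continuousOn
    (hu : ContinuousOn Complex.arg (spectrum ℂ (u : A))) :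
    selfAdjoint.expUnitary (Unitary.argSelfAdjoint u) = u := by
  have hexp : ∀ z ∈ spectrum ℂ (u : A), NormedSpace.exp (Complex.I • (Complex.arg z : ℂ)) = z := by
    intro z hz
    have hz₁ : ‖z‖ = 1 := spectrum.norm_eq_one_of_unitary u.2 hz
    rw [← Complex.exp_eq_exp_ℂ, smul_eq_mul, mul_comm]
    simpa only [hz₁, Complex.ofReal_one, one_mul] using Complex.norm_mul_exp_arg_mul_I z
  ext
  rw [selfAdjoint.expUnitary_coe, Unitary.argSelfAdjoint_coe, ← CFC.exp_eq_normedSpace_exp (𝕜 := ℂ),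
    ← cfc_comp_smul .., ← cfc_comp' .., cfc_congr hexp, cfc_id' ℂ (u : A)]

/-- The power `u ^ t = exp (i t arg u)`, for the principal branch of the argument. -/
noncomputable def unitaryRpow (u : unitary A) (t : ℝ) : unitary A :=
  selfAdjoint.expUnitary (t • Unitary.argSelfAdjoint u)

lemma unitaryRpow_zero : unitaryRpow u 0 = 1 := by
  rw [unitaryRpow, zero_smul, selfAdjoint.expUnitary_zero]

lemma unitaryRpow_one (hu : ContinuousOn Complex.arg (spectrum ℂ (u : A))) :
    unitaryRpow u 1 = u := by
  rw [unitaryRpow, one_smul, expUnitary_argSelfAdjoint_of_continuousOn hu]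

lemma continuous_unitaryRpow : Continuous (unitaryRpow u) :=
  selfAdjoint.continuous_expUnitary.comp (continuous_id.smul continuous_const)

lemma commute_unitaryRpow_left {a : A} (h : Commute (u : A) a) (t : ℝ) :
    Commute (unitaryRpow u t : A) a := by
  have hstar : Commute (star (u : A)) a := commute_iff_lie_eq.mpr <| norm_le_zero_iff.mp <|
    (norm_star_lie_of_mem_unitary u.2 a).trans_le (by rw [h.lie_eq, norm_zero])
  rw [unitaryRpow, selfAdjoint.expUnitary_coe, selfAdjoint.val_smul, Unitary.argSelfAdjoint_coe]
  exact (((h.cfc hstar _).smul_left t).smul_left Complex.I).exp_left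

end FractionalPower

section Vanishing

lemma finite_spectrum_of_finiteDimensional {𝕜 E : Type*} [NontriviallyNormedField 𝕜]
    [CompleteSpace 𝕜] [NormedAddCommGroup E] [NormedSpace 𝕜 E] [FiniteDimensional 𝕜 E]
    (T : E →L[𝕜] E) : (spectrum 𝕜 T).Finite :=
  have := FiniteDimensional.complete 𝕜 E
  (Module.End.finite_spectrum T.toLinearMap).subset fun _ hz hz' =>
    hz (ContinuousLinearMap.isUnit_iff_bijective.mpr ((Module.End.isUnit_iff _).mp hz'))

lemma continuousOn_wilsonDirac {H : Type*} [NormedAddCommGroup H] [InnerProductSpace ℂ H]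
    [CompleteSpace H] {d : ℕ} {X : Type*} [TopologicalSpace X] {S : Set X}
    (cs : CliffordSystem H d) {U : X → Fin d → H →L[ℂ] H}
    (hU : ∀ j, ContinuousOn (fun x => U x j) S) (κ m : ℝ) :
    ContinuousOn (fun x => wilsonDirac cs (U x) κ m) S := by
  have (j : Fin d) : ContinuousOn (fun x => star (U x j)) S := (hU j).star
  unfold wilsonDirac xPart yPart
  fun_prop

variable {H : Type*} [NormedAddCommGroup H] [InnerProductSpace ℂ H] [FiniteDimensional ℂ H]
  {d : ℕ} {cs : CliffordSystem H d}

lemma Ind_wilsonDirac_one_eq_zero (hd : 1 ≤ d) (m : ℝ) : Ind (wilsonDirac cs 1 1 m) = 0 := by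
  have hD : wilsonDirac cs 1 1 m = (m : ℂ) • cs.γ := by
    simp [wilsonDirac, xPart, yPart, ← two_smul ℂ]
  have hinj : Function.Injective (cs.c ⟨0, hd⟩) := (ContinuousLinearMap.isUnit_iff_bijective.mp
    (Unitary.isUnit_coe (U := ⟨_, cs.c_mem_unitary ⟨0, hd⟩⟩))).1
  refine Ind_eq_zero_of_anticommute hinj ?_
  rw [hD, mul_smul_comm, smul_mul_assoc, cs.γ_anticomm, smul_neg, neg_neg]

lemma Ind_wilsonDirac_eq_zero_of_commute (hd : 1 ≤ d) {m : ℝ}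
    (hm : ∀ k : ℕ, k ≤ d → m ≠ 2 * k) {U : Fin d → H →L[ℂ] H} (hU : cs.IsCommutantUnitary U)
    (hcomm : ∀ j l, Commute (U j) (U l)) : Ind (wilsonDirac cs U 1 m) = 0 := by
  let V : ℝ → Fin d → H →L[ℂ] H := fun t j => unitaryRpow ⟨U j, hU.mem_unitary j⟩ t
  have hV₀ : V 0 = 1 := funext fun j => congrArg Subtype.val unitaryRpow_zero
  have hV₁ : V 1 = U := funext fun j => congrArg Subtype.val <|
    unitaryRpow_one ((finite_spectrum_of_finiteDimensional (U j)).continuousOn _)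
  have hVU (t : ℝ) : cs.IsCommutantUnitary (V t) :=
    ⟨fun j => (unitaryRpow _ t).2, fun j l => commute_unitaryRpow_left (hU.commute_c j l) t,
      fun j => commute_unitaryRpow_left (hU.commute_γ j) t⟩
  have hVcomm (t : ℝ) (j l : Fin d) : Commute (V t j) (V t l) :=
    commute_unitaryRpow_left (commute_unitaryRpow_left (hcomm l j) t).symm t
  obtain ⟨ε, hε, hunit⟩ := exists_pos_forall_isUnit_wilsonDirac d hm
  have hcont : Continuous fun t => wilsonDirac cs (V t) 1 m :=
    continuousOn_univ.mp <| continuousOn_wilsonDirac cs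
      (fun j => (continuous_subtype_val.comp continuous_unitaryRpow).continuousOn) 1 m
  calc Ind (wilsonDirac cs U 1 m) = Ind (wilsonDirac cs (V 1) 1 m) := by rw [hV₁]
    _ = Ind (wilsonDirac cs (V 0) 1 m) :=
      Ind_eq_of_continuousOn isPreconnected_univ hcont.continuousOn
        (fun t _ => (hVU t).isSelfAdjoint_wilsonDirac)
        (fun t _ => hunit H cs (V t) (hVU t) fun j l => by
          rw [(hVcomm t j l).lie_eq, norm_zero]; exact hε.le)
        (Set.mem_univ 1) (Set.mem_univ 0)
    _ = 0 := by rw [hV₀, Ind_wilsonDirac_one_eq_zero hd]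

end Vanishing

lemma ne_two_mul_natCast_of_pos_of_lt_two {x : ℝ} (h₀ : 0 < x) (h₂ : x < 2) (k : ℕ) :
    x ≠ 2 * k := by
  rintro rfl
  rcases k.eq_zero_or_pos with rfl | hk
  · simp at h₀
  · linarith [Nat.one_le_cast (α := ℝ).mpr hk]

theorem statement7_general (d : ℕ) (hd : 1 ≤ d) (m : ℝ) (hm : ∀ k : ℕ, k ≤ d → m ≠ 2 * k) :
    ∃ ε > (0 : ℝ), ∀ (H : Type*) [NormedAddCommGroup H] [InnerProductSpace ℂ H]
      [FiniteDimensional ℂ H],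
      ∀ (cs : CliffordSystem H d) (U : ℝ → Fin d → H →L[ℂ] H),
        (∀ j, ContinuousOn (fun t => U t j) (Set.Icc (0 : ℝ) 1)) →
        (∀ t ∈ Set.Icc (0 : ℝ) 1, ∀ j, U t j ∈ unitary (H →L[ℂ] H)) →
        (∀ t ∈ Set.Icc (0 : ℝ) 1, ∀ j l, Commute (U t j) (cs.c l)) →
        (∀ t ∈ Set.Icc (0 : ℝ) 1, ∀ j, Commute (U t j) cs.γ) →
        (∀ t ∈ Set.Icc (0 : ℝ) 1, ∀ j l, ‖U t j * U t l - U t l * U t j‖ < ε) →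
        (∀ t ∈ Set.Icc (0 : ℝ) 1, IsUnit (wilsonDirac cs (U t) 1 m)) ∧
        (∀ t ∈ Set.Icc (0 : ℝ) 1, ∀ s ∈ Set.Icc (0 : ℝ) 1,
          Ind (wilsonDirac cs (U t) 1 m) = Ind (wilsonDirac cs (U s) 1 m)) ∧
        ((∀ j l, Commute (U 1 j) (U 1 l)) → Ind (wilsonDirac cs (U 0) 1 m) = 0) := by
  obtain ⟨ε, hε, hgap⟩ := exists_pos_forall_isUnit_wilsonDirac d hm
  refine ⟨ε, hε, fun H _ _ _ cs U hcont hmem hc hγ hcomm => ?_⟩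
  have hU : ∀ t ∈ Set.Icc (0 : ℝ) 1, cs.IsCommutantUnitary (U t) := fun t ht =>
    ⟨hmem t ht, hc t ht, hγ t ht⟩
  have hunit : ∀ t ∈ Set.Icc (0 : ℝ) 1, IsUnit (wilsonDirac cs (U t) 1 m) := fun t ht =>
    hgap H cs (U t) (hU t ht) fun j l => (hcomm t ht j l).le
  have hInd : ∀ t ∈ Set.Icc (0 : ℝ) 1, ∀ s ∈ Set.Icc (0 : ℝ) 1,
      Ind (wilsonDirac cs (U t) 1 m) = Ind (wilsonDirac cs (U s) 1 m) := fun t ht s hs =>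
    Ind_eq_of_continuousOn isPreconnected_Icc (continuousOn_wilsonDirac cs hcont 1 m)
      (fun t ht => (hU t ht).isSelfAdjoint_wilsonDirac) hunit ht hs
  refine ⟨hunit, hInd, fun hcomm₁ => ?_⟩
  rw [hInd 0 unitInterval.zero_mem 1 unitInterval.one_mem]
  exact Ind_wilsonDirac_eq_zero_of_commute hd hm (hU 1 unitInterval.one_mem) hcomm₁

/-- `𝐈(D(1,m))` is a homotopy invariant of paths of `ε`-commuting unitary
tuples, and vanishes if the tuple can be connected to a commuting tuple. -/
theorem statement7 (d : ℕ) (hd : 1 ≤ d) (m : ℝ) (hm0 : 0 < m) (hm2 : m < 2) :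
    ∃ ε > (0 : ℝ), ∀ (H : Type) [NormedAddCommGroup H] [InnerProductSpace ℂ H]
      [FiniteDimensional ℂ H],
      ∀ (cs : CliffordSystem H d) (U : ℝ → Fin d → H →L[ℂ] H),
        (∀ j, ContinuousOn (fun t => U t j) (Set.Icc (0 : ℝ) 1)) →
        (∀ t ∈ Set.Icc (0 : ℝ) 1, ∀ j, U t j ∈ unitary (H →L[ℂ] H)) →
        (∀ t ∈ Set.Icc (0 : ℝ) 1, ∀ j l, Commute (U t j) (cs.c l)) →
        (∀ t ∈ Set.Icc (0 : ℝ) 1, ∀ j, Commute (U t j) cs.γ) →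
        (∀ t ∈ Set.Icc (0 : ℝ) 1, ∀ j l, ‖U t j * U t l - U t l * U t j‖ < ε) →
        (∀ t ∈ Set.Icc (0 : ℝ) 1, IsUnit (wilsonDirac cs (U t) 1 m)) ∧
        (∀ t ∈ Set.Icc (0 : ℝ) 1, ∀ s ∈ Set.Icc (0 : ℝ) 1,
          Ind (wilsonDirac cs (U t) 1 m) = Ind (wilsonDirac cs (U s) 1 m)) ∧
        ((∀ j l, Commute (U 1 j) (U 1 l)) → Ind (wilsonDirac cs (U 0) 1 m) = 0) := by
  exact statement7_general d hd m fun k _ => ne_two_mul_natCast_of_pos_of_lt_two hm0 hm2 k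
end
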